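/- Let X be a finite-dimensional generalized cactoid. Then X is an absolute neighborhood retract (ANR) if and only if X has only finitely many maximal cyclic subsets. -/

import Mathlib

open Metric Set

/-- A Jordan curve: a subset homeomorphic to the circle. -/
def IsJordanCurve {X : Type} [TopologicalSpace X] (J : Set X) : Prop :=
  Nonempty (AddCircle (1 : ℝ) ≃ₜ J)

/-- A set is cyclicly connected if every pair of its points lies on a Jordan curve in it. -/
def CyclicallyConnected {X : Type} [TopologicalSpace X] (C : Set X) : Prop :=
  ∀ x ∈ C, ∀ y ∈ C, ∃ J : Set X, J ⊆ C ∧ IsJordanCurve J ∧ x ∈ J ∧ y ∈ J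

/-- A maximal cyclic subset: non-degenerate, cyclicly connected, and not a proper subset
of any cyclicly connected subset. -/
def MaximalCyclic {X : Type} [TopologicalSpace X] (T : Set X) : Prop :=
  ¬ T.Subsingleton ∧ CyclicallyConnected T ∧
    ∀ C : Set X, CyclicallyConnected C → T ⊆ C → C = T
/-- Covering dimension at most `n`: every open cover admits an open shrinking
(refinement) of order at most `n + 1`. -/
def CovDimLE (X : Type) [TopologicalSpace X] (n : ℕ) : Prop :=
  ∀ (ι : Type) (U : ι → Set X), (∀ i, IsOpen (U i)) → (⋃ i, U i) = Set.univ →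
    ∃ V : ι → Set X, (∀ i, IsOpen (V i)) ∧ (∀ i, V i ⊆ U i) ∧ (⋃ i, V i) = Set.univ ∧
      ∀ x : X, {i | x ∈ V i}.Finite ∧ {i | x ∈ V i}.ncard ≤ n + 1

/-- Homeomorphic to the 2-sphere. -/
def IsTopological2Sphere (T : Type) [TopologicalSpace T] : Prop :=
  Nonempty (T ≃ₜ Metric.sphere (0 : EuclideanSpace ℝ (Fin 3)) 1)

/-- A closed surface: a compact, connected, Hausdorff topological 2-manifold
without boundary. -/
def IsClosedSurface (S : Type) [TopologicalSpace S] : Prop :=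
  CompactSpace S ∧ ConnectedSpace S ∧ T2Space S ∧
    Nonempty (ChartedSpace (EuclideanSpace ℝ (Fin 2)) S)

/-- An absolute neighborhood retract: whenever `X` embeds as a closed subset of a
metric space `Y`, its image is a retract of some open neighborhood. -/
def IsANR (X : Type) [MetricSpace X] : Prop :=
  ∀ (Y : Type) (mY : MetricSpace Y), letI := mY; ∀ e : X → Y, Topology.IsClosedEmbedding e →
    ∃ U : Set Y, IsOpen U ∧ Set.range e ⊆ U ∧
      ∃ r : C(↥U, Y), (∀ u : ↥U, r u ∈ Set.range e) ∧
        ∀ (x : X) (h : e x ∈ U), r ⟨e x, h⟩ = e x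

/-!
In a compact absolute neighborhood retract every sufficiently small set contracts in the whole
space. A maximal cyclic set `T` is chordless: no path of the space leaves it and comes back at a
different point. Sending a point `x` to the first point of `T` on a path from `x` is therefore a
retraction onto `T`, so a small `T` is itself contractible. Only finitely many maximal cyclic sets
have diameter above a given bound, hence only finitely many are not contractible, and spheres are
not contractible.

Conversely, finitely many maximal cyclic sets can be joined by arcs into a closed, connected,
chordless skeleton `P` which is a neighborhood extensor. Attaching one by one arcs to the points of
a dense sequence produces increasing skeleta whose retractions converge uniformly to the identity,
and each retraction is joined to the next by a homotopy along the attached arc. Outside the `n`-th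
skeleton these arcs are small, so near a closed embedded copy of the space a neighborhood
retraction is obtained by running through the homotopies as the distance to the copy tends to zero.
-/

/-! ### Locally connected complete spaces are locally path connected -/

section ConnectedWithin

open Filter Topology Uniformity

variable {X : Type*} [PseudoMetricSpace X] {S : Set X} {x y z : X} {f : ℝ → X} {δ ε η : ℝ}

/-- The points `x` and `y` lie in a common connected set of diameter at most `ε`; this is the
closeness relation for which chains of points can be refined to paths. -/
def ConnectedWithin (ε : ℝ) (x y : X) : Prop :=
  ∃ S : Set X, IsPreconnected S ∧ x ∈ S ∧ y ∈ S ∧ ∀ u ∈ S, ∀ v ∈ S, dist u v ≤ ε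

/-- A function, possibly discontinuous, whose values at uniformly close points are
`ConnectedWithin ε`. -/
def IsFine (ε : ℝ) (f : ℝ → X) : Prop :=
  ∀ᶠ p : ℝ × ℝ in 𝓤 ℝ, ConnectedWithin ε (f p.1) (f p.2)

namespace ConnectedWithin

theorem refl (hε : 0 ≤ ε) (x : X) : ConnectedWithin ε x x :=
  ⟨{x}, isPreconnected_singleton, rfl, rfl, by simp [hε]⟩

theorem symm (h : ConnectedWithin ε x y) : ConnectedWithin ε y x :=
  let ⟨S, hS, hx, hy, hd⟩ := h
  ⟨S, hS, hy, hx, hd⟩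

theorem dist_le (h : ConnectedWithin ε x y) : dist x y ≤ ε :=
  let ⟨_, _, hx, hy, hd⟩ := h
  hd x hx y hy

theorem nonneg (h : ConnectedWithin ε x y) : 0 ≤ ε :=
  dist_nonneg.trans h.dist_le

theorem trans (hxy : ConnectedWithin ε x y) (hyz : ConnectedWithin δ y z) :
    ConnectedWithin (ε + δ) x z := by
  have hε := hxy.nonneg
  have hδ := hyz.nonneg
  obtain ⟨S, hS, hxS, hyS, hSd⟩ := hxy
  obtain ⟨T, hT, hyT, hzT, hTd⟩ := hyz
  refine ⟨S ∪ T, hS.union y hyS hyT hT, .inl hxS, .inr hzT, ?_⟩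
  rintro u (hu | hu) v (hv | hv)
  · linarith [hSd u hu v hv]
  · linarith [dist_triangle u y v, hSd u hu y hyS, hTd y hyT v hv]
  · linarith [dist_triangle u y v, hTd u hu y hyT, hSd y hyS v hv]
  · linarith [hTd u hu v hv]

end ConnectedWithin

theorem eventually_connectedWithin [LocallyConnectedSpace X] (hε : 0 < ε) (x : X) :
    ∀ᶠ y in 𝓝 x, ConnectedWithin ε x y := by
  obtain ⟨V, ⟨hVo, hxV, hVc⟩, hV⟩ :=
    (LocallyConnectedSpace.open_connected_basis x).mem_iff.1 (ball_mem_nhds x (half_pos hε))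
  filter_upwards [hVo.mem_nhds hxV] with y hy
  exact ⟨V, hVc.isPreconnected, hxV, hy, fun u hu v hv => by
    linarith [dist_triangle_right u v x, mem_ball.1 (hV hu), mem_ball.1 (hV hv)]⟩

namespace IsFine

theorem nonneg (hf : IsFine ε f) : 0 ≤ ε :=
  (hf.exists).elim fun _ => ConnectedWithin.nonneg

theorem comp_uniformContinuous (hf : IsFine ε f) {φ : ℝ → ℝ} (hφ : UniformContinuous φ) :
    IsFine ε (f ∘ φ) :=
  hφ.eventually hf

theorem step (h : ConnectedWithin ε x y) : IsFine ε fun t => if t ≤ 0 then x else y :=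
  .of_forall fun p => by
    dsimp only
    split_ifs
    exacts [.refl h.nonneg x, h, h.symm, .refl h.nonneg y]

theorem exists_concat {F : ℕ → ℝ → X} (n : ℕ) (hF : ∀ i, IsFine ε (F i))
    (hend : ∀ i, F i 1 = F (i + 1) 0) :
    ∃ g, IsFine (ε + ε) g ∧ ∀ t ∈ Icc (0 : ℝ) 1, g t = F ⌊n * t⌋₊ (n * t - ⌊n * t⌋₊) := by
  have hε : 0 ≤ ε := (hF 0).nonneg
  have hn : (0 : ℝ) ≤ n := n.cast_nonneg
  obtain ⟨δ, hδ, hFδ⟩ := mem_uniformity_dist.1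
    ((eventually_all_finset (Finset.range (n + 1))).2 fun i _ => hF i)
  have hclose : ∀ i ≤ n, ∀ u v, |u - v| < δ → ConnectedWithin ε (F i u) (F i v) :=
    fun i hi u v h => hFδ (a := u) (b := v) h i (Finset.mem_range_succ_iff.2 hi)
  let G : ℝ → X := fun s => F ⌊s⌋₊ (s - ⌊s⌋₊)
  have hG : ∀ s t : ℝ, 0 ≤ s → t ≤ n → s ≤ t → t - s < min δ 1 →
      ConnectedWithin (ε + ε) (G s) (G t) := by
    intro s t hs ht hst hd
    obtain ⟨hdδ, hd₁⟩ := lt_min_iff.1 hd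
    have hi : ⌊t⌋₊ ≤ n := Nat.floor_le_of_le ht
    rcases (Nat.floor_mono hst).eq_or_lt with h | h
    · simp only [G, h]
      exact (hclose _ hi _ _ (by rw [abs_lt]; constructor <;> linarith)).trans (.refl hε _)
    · have hfloor : ⌊t⌋₊ = ⌊s⌋₊ + 1 :=
        le_antisymm (Nat.floor_add_one hs ▸ Nat.floor_mono (by linarith)) h
      have hs₁ := Nat.lt_floor_add_one s
      have ht₀ := Nat.floor_le (hs.trans hst)
      simp only [G, hfloor, Nat.cast_add_one] at ht₀ hi ⊢
      refine (hclose _ (by omega) _ 1 ?_).trans (hend ⌊s⌋₊ ▸ hclose _ hi 0 _ ?_) <;>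
        rw [abs_lt] <;> constructor <;> linarith
  let c : ℝ → ℝ := fun t => max 0 (min (n : ℝ) t)
  have hfine : IsFine (ε + ε) (G ∘ c) := by
    refine mem_uniformity_dist.2 ⟨min δ 1, lt_min hδ one_pos, fun {a b} hab => ?_⟩
    have hab' : |c a - c b| < min δ 1 := by
      simpa only [coe_projIcc] using (abs_projIcc_sub_projIcc hn).trans_lt hab
    have hmem : ∀ t, 0 ≤ c t ∧ c t ≤ n := fun t => ⟨le_max_left _ _, max_le hn (min_le_left _ _)⟩
    rcases le_total (c a) (c b) with h | h
    · exact hG _ _ (hmem a).1 (hmem b).2 h (by linarith [neg_le_abs (c a - c b)])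
    · exact (hG _ _ (hmem b).1 (hmem a).2 h ((le_abs_self _).trans_lt hab')).symm
  refine ⟨_, hfine.comp_uniformContinuous (uniformContinuous_const_smul (n : ℝ)), fun t ht => ?_⟩
  have hc : c (n * t) = n * t := by
    rw [show c (n * t) = max 0 (min (n : ℝ) (n * t)) from rfl,
      min_eq_right (mul_le_of_le_one_right hn ht.2), max_eq_right (mul_nonneg hn ht.1)]
  simp only [Function.comp_apply, smul_eq_mul, hc, G]

end IsFine

theorem sub_floor_mem_Icc {s : ℝ} (hs : 0 ≤ s) : s - ⌊s⌋₊ ∈ Icc (0 : ℝ) 1 :=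
  ⟨sub_nonneg.2 (Nat.floor_le hs), by linarith [Nat.lt_floor_add_one s]⟩

theorem exists_isFine_of_isPreconnected [LocallyConnectedSpace X] (hS : IsPreconnected S)
    (hx : x ∈ S) (hy : y ∈ S) (hη : 0 < η) :
    ∃ f : ℝ → X, f 0 = x ∧ f 1 = y ∧ MapsTo f (Icc 0 1) S ∧ IsFine η f := by
  let r : X → X → Prop := fun a b => a ∈ S ∧ b ∈ S ∧ ConnectedWithin (η / 2) a b
  have hr : Std.Symm r := ⟨fun _ _ h => ⟨h.2.1, h.1, h.2.2.symm⟩⟩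
  have hchain : Relation.ReflTransGen r x y := by
    refine hS.induction₂ (Relation.ReflTransGen r) (fun a ha => ?_)
      (fun _ _ _ _ _ _ => .trans) (fun _ _ _ _ => Std.Symm.symm _ _) hx hy
    filter_upwards [(eventually_connectedWithin (half_pos hη) a).filter_mono nhdsWithin_le_nhds,
      self_mem_nhdsWithin] with b hab hb
    exact .single ⟨ha, hb, hab⟩
  obtain ⟨n, p, hp₀, hpn, hp⟩ : ∃ (n : ℕ) (p : ℕ → X), p 0 = x ∧ p n = y ∧
      ∀ i, r (p i) (p (i + 1)) := by
    induction hchain using Relation.ReflTransGen.head_induction_on with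
    | refl => exact ⟨0, fun _ => y, rfl, rfl, fun _ => ⟨hy, hy, .refl (half_pos hη).le y⟩⟩
    | @head a b hab _ ih =>
      obtain ⟨n, p, rfl, hpn, hp⟩ := ih hab.2.1
      exact ⟨n + 1, (Nat.casesOn · a p), rfl, hpn, Nat.rec hab fun i _ => hp i⟩
  obtain ⟨f, hf, hfF⟩ := IsFine.exists_concat n (fun i => .step (hp i).2.2) (by simp)
  refine ⟨f, ?_, ?_, fun t ht => ?_, add_halves η ▸ hf⟩
  · rw [hfF 0 (by simp)]
    simp [hp₀]
  · rw [hfF 1 (by simp)]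
    simp [hpn]
  · rw [hfF t ht]
    split_ifs
    exacts [(hp _).1, (hp _).2.1]

theorem IsFine.exists_refinement [LocallyConnectedSpace X] (hf : IsFine ε f) (hη : 0 < η) :
    ∃ g : ℝ → X, g 0 = f 0 ∧ g 1 = f 1 ∧ IsFine η g ∧
      ∀ t ∈ Icc (0 : ℝ) 1, dist (g t) (f t) ≤ ε + ε := by
  obtain ⟨δ, hδ, hfδ⟩ := mem_uniformity_dist.1 hf
  have hclose : ∀ u v, |u - v| < δ → ConnectedWithin ε (f u) (f v) :=
    fun u v h => hfδ (a := u) (b := v) h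
  obtain ⟨m, hm⟩ := exists_nat_one_div_lt hδ
  obtain ⟨n, hn₀, hn⟩ : ∃ n : ℕ, (0 : ℝ) < n ∧ 1 / (n : ℝ) < δ :=
    ⟨m + 1, by positivity, by exact_mod_cast hm⟩
  let p : ℕ → X := fun i => f (i / n)
  have hlink : ∀ i, ∃ F : ℝ → X, F 0 = p i ∧ F 1 = p (i + 1) ∧
      (∀ t ∈ Icc (0 : ℝ) 1, dist (F t) (p i) ≤ ε) ∧ IsFine (η / 2) F := by
    intro i
    obtain ⟨S, hS, hxS, hyS, hd⟩ : ConnectedWithin ε (p i) (p (i + 1)) := by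
      refine hclose _ _ ?_
      rwa [← sub_div, Nat.cast_add_one, sub_add_cancel_left, neg_div, abs_neg,
        abs_of_pos (by positivity)]
    obtain ⟨F, h₀, h₁, hFS, hF⟩ :=
      exists_isFine_of_isPreconnected hS hxS hyS (half_pos hη)
    exact ⟨F, h₀, h₁, fun t ht => hd _ (hFS ht) _ hxS, hF⟩
  choose F hF₀ hF₁ hFd hF using hlink
  obtain ⟨g, hg, hgF⟩ := exists_concat n hF fun i => (hF₁ i).trans (hF₀ _).symm
  refine ⟨g, ?_, ?_, add_halves η ▸ hg, fun t ht => ?_⟩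
  · simp [hgF 0 (by simp), hF₀, p]
  · simp [hgF 1 (by simp), hF₀, p, hn₀.ne']
  · have hnt : 0 ≤ n * t := mul_nonneg hn₀.le ht.1
    obtain ⟨hfl₀, hfl₁⟩ := sub_floor_mem_Icc hnt
    have hpf : dist (p ⌊n * t⌋₊) (f t) ≤ ε := by
      refine (hclose _ _ (lt_of_le_of_lt ?_ hn)).dist_le
      rw [abs_sub_comm, abs_of_nonneg, sub_le_iff_le_add, ← add_div, le_div_iff₀ hn₀]
      · linarith
      · rw [sub_nonneg, div_le_iff₀ hn₀]
        linarith
    rw [hgF t ht]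
    exact (dist_triangle _ _ _).trans (add_le_add (hFd _ _ ⟨hfl₀, hfl₁⟩) hpf)

theorem uniformContinuous_of_isFine {F : ℕ → ℝ → X} {e : ℕ → ℝ} {C : ℝ} {p : unitInterval → X}
    (hF : ∀ k, IsFine (e k) (F k)) (he : Tendsto e atTop (𝓝 0))
    (hp : ∀ k (t : unitInterval), dist (F k t) (p t) ≤ C * e k) : UniformContinuous p := by
  refine Metric.uniformContinuous_iff.2 fun η hη => ?_
  obtain ⟨k, hk⟩ := ((he.const_mul (C + 1 + C)).eventually_lt_const (by simpa using hη)).exists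
  obtain ⟨δ, hδ, hFδ⟩ := mem_uniformity_dist.1 (hF k)
  refine ⟨δ, hδ, fun {s t} hst => ?_⟩
  have hclose : dist (F k s) (F k t) ≤ e k := (hFδ (a := s) (b := t) hst).dist_le
  have hs := hp k s
  rw [dist_comm] at hs
  linarith [dist_triangle4 (p s) (F k s) (F k t) (p t), hp k t]

end ConnectedWithin

section LocallyPathConnected

open Filter Topology

variable {X : Type*} [MetricSpace X] {x y : X} {ε : ℝ}

theorem ConnectedWithin.joinedIn [CompleteSpace X] [LocallyConnectedSpace X]
    (hε : 0 < ε) (h : ConnectedWithin ε x y) : JoinedIn (closedBall x (5 * ε)) x y := by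
  let e : ℕ → ℝ := fun k => ε / 2 ^ k
  have he : Tendsto e atTop (𝓝 0) := by
    simpa [e, div_eq_mul_inv] using
      (tendsto_pow_atTop_nhds_zero_of_lt_one (r := (2⁻¹ : ℝ)) (by norm_num)
        (by norm_num)).const_mul ε
  let G : ℕ → Type _ := fun k => {f : ℝ → X // f 0 = x ∧ f 1 = y ∧ IsFine (e k) f}
  have hrefine : ∀ k (f : G k), ∃ g : G (k + 1), ∀ t : unitInterval,
      dist (f.1 t) (g.1 t) ≤ 4 * ε / 2 / 2 ^ k := by
    rintro k ⟨f, hf₀, hf₁, hf⟩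
    obtain ⟨g, hg₀, hg₁, hg, hd⟩ := hf.exists_refinement (η := e (k + 1)) (by positivity)
    refine ⟨⟨g, hg₀.trans hf₀, hg₁.trans hf₁, hg⟩, fun t => ?_⟩
    rw [dist_comm]
    exact (hd t t.2).trans_eq (by ring)
  choose R hR using hrefine
  let f₀ : G 0 := ⟨_, if_pos le_rfl, if_neg (by norm_num), IsFine.step (by simpa [e] using h)⟩
  have hf₀ : ∀ t, dist (f₀.1 t) x ≤ ε := fun t => by
    dsimp only [f₀]
    split_ifs
    exacts [by simpa using hε.le, h.symm.dist_le]
  let F : ∀ k, G k := Nat.rec f₀ R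
  have hF : ∀ t : unitInterval, ∀ k, dist ((F k).1 t) ((F (k + 1)).1 t) ≤ 4 * ε / 2 / 2 ^ k :=
    fun t k => hR k (F k) t
  choose p hp using fun t => cauchySeq_tendsto_of_complete (cauchySeq_of_le_geometric_two (hF t))
  have hdist : ∀ k (t : unitInterval), dist ((F k).1 t) (p t) ≤ 4 * e k := fun k t =>
    (dist_le_of_le_geometric_two_of_tendsto (hF t) (hp t) k).trans_eq (mul_div_assoc _ _ _)
  have hpc := (uniformContinuous_of_isFine (fun k => (F k).2.2.2) he hdist).continuous
  refine ⟨⟨⟨p, hpc⟩, tendsto_nhds_unique (hp 0) ?_, tendsto_nhds_unique (hp 1) ?_⟩, fun t => ?_⟩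
  · simp [(F _).2.1]
  · simp [(F _).2.2.1]
  · have hd : dist (f₀.1 t) (p t) ≤ 4 * ε := (hdist 0 t).trans_eq (by simp [e])
    change dist (p t) x ≤ 5 * ε
    linarith [dist_triangle_left (p t) x (f₀.1 t), hf₀ t]

theorem locallyPathConnectedSpace_of_completeSpace [CompleteSpace X] [LocallyConnectedSpace X] :
    LocallyPathConnectedSpace X := by
  refine ⟨fun x => hasBasis_self.2 fun U hU => ?_⟩
  obtain ⟨r, hr, hrU⟩ := Metric.mem_nhds_iff.1 hU
  refine ⟨pathComponentIn U x, ?_, isPathConnected_pathComponentIn (mem_of_mem_nhds hU),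
    pathComponentIn_subset⟩
  filter_upwards [eventually_connectedWithin (ε := r / 6) (by positivity) x] with y hy
  exact (hy.joinedIn (by positivity)).mono
    ((closedBall_subset_ball (by linarith)).trans hrU)

end LocallyPathConnected

/-! ### Arcs and Jordan curves -/

section Arc

/-- The set `A` is an arc with endpoints `a` and `b`. The parametrization is a function on `ℝ`
restricted to `[0, 1]`, which makes it easy to cut and glue. -/
def IsArc {X : Type*} [TopologicalSpace X] (A : Set X) (a b : X) : Prop :=
  ∃ f : ℝ → X, ContinuousOn f (Icc 0 1) ∧ InjOn f (Icc 0 1) ∧ f 0 = a ∧ f 1 = b ∧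
    f '' Icc 0 1 = A

theorem exists_continuousOn_Icc_glue {X : Type*} [TopologicalSpace X] {f g : ℝ → X} {c m d : ℝ}
    (hcm : c ≤ m) (hmd : m ≤ d) (hf : ContinuousOn f (Icc c m)) (hg : ContinuousOn g (Icc m d))
    (hfg : f m = g m) :
    ∃ k, ContinuousOn k (Icc c d) ∧ EqOn k f (Icc c m) ∧ EqOn k g (Icc m d) := by
  let k : ℝ → X := fun t => if t ≤ m then f t else g t
  have hkf : EqOn k f (Icc c m) := fun t ht => if_pos ht.2
  have hkg : EqOn k g (Icc m d) := fun t ht => by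
    rcases ht.1.eq_or_lt with rfl | hlt
    · exact (if_pos le_rfl).trans hfg
    · exact if_neg hlt.not_ge
  refine ⟨k, ?_, hkf, hkg⟩
  rw [← Icc_union_Icc_eq_Icc hcm hmd]
  exact (hf.congr hkf).union_of_isClosed (hg.congr hkg) isClosed_Icc isClosed_Icc

namespace IsArc

section TopologicalSpace

variable {X : Type*} [TopologicalSpace X] {A B F : Set X} {a b x : X} {c d : ℝ}

theorem of_bijOn {f : ℝ → X} {φ : ℝ → ℝ} (hφ : Continuous φ) (hb : BijOn φ (Icc 0 1) (Icc c d))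
    (hf : ContinuousOn f (Icc c d)) (hi : InjOn f (Icc c d)) :
    IsArc (f '' Icc c d) (f (φ 0)) (f (φ 1)) :=
  ⟨f ∘ φ, hf.comp hφ.continuousOn hb.mapsTo, hi.comp hb.injOn hb.mapsTo, rfl, rfl, by
    rw [image_comp, hb.image_eq]⟩

theorem of_Icc {f : ℝ → X} (hcd : c < d) (hf : ContinuousOn f (Icc c d))
    (hi : InjOn f (Icc c d)) : IsArc (f '' Icc c d) (f c) (f d) := by
  have hb : BijOn (fun t : ℝ => (d - c) * t + c) (Icc 0 1) (Icc c d) := by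
    convert InjOn.bijOn_image (s := Icc (0 : ℝ) 1) (f := fun t => (d - c) * t + c) ?_
    · simp [image_affine_Icc' (sub_pos.2 hcd)]
    · exact fun s _ t _ h => mul_left_cancel₀ (sub_pos.2 hcd).ne' (add_right_cancel h)
  simpa using of_bijOn (by fun_prop) hb hf hi

theorem exists_param (h : IsArc A a b) (hcd : c < d) : ∃ f : ℝ → X, ContinuousOn f (Icc c d) ∧
    InjOn f (Icc c d) ∧ f c = a ∧ f d = b ∧ f '' Icc c d = A := by
  obtain ⟨f, hf, hi, rfl, rfl, rfl⟩ := h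
  have hdc : 0 < d - c := sub_pos.2 hcd
  have himg : (fun t => (t - c) / (d - c)) '' Icc c d = Icc 0 1 := by
    simp only [div_eq_inv_mul]
    rw [← image_image (fun t => (d - c)⁻¹ * t), image_sub_const_Icc,
      image_mul_left_Icc' (inv_pos.2 hdc)]
    simp [hdc.ne']
  have hm : MapsTo (fun t => (t - c) / (d - c)) (Icc c d) (Icc 0 1) := himg ▸ mapsTo_image _ _
  refine ⟨fun t => f ((t - c) / (d - c)), hf.comp (by fun_prop) hm, hi.comp ?_ hm, by simp,
    by simp [hdc.ne'], by rw [← himg, image_image]⟩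
  exact fun s _ t _ h => sub_left_injective ((div_left_inj' hdc.ne').1 h)

theorem symm (h : IsArc A a b) : IsArc A b a := by
  obtain ⟨f, hf, hi, rfl, rfl, rfl⟩ := h
  have hb : BijOn (fun t : ℝ => 1 - t) (Icc 0 1) (Icc 0 1) := by
    convert (sub_right_injective (b := (1 : ℝ))).injOn.bijOn_image (s := Icc 0 1)
    simp
  simpa using of_bijOn (by fun_prop) hb hf hi

theorem left_mem (h : IsArc A a b) : a ∈ A := by
  obtain ⟨f, -, -, rfl, -, rfl⟩ := h
  exact mem_image_of_mem _ (by simp)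

theorem right_mem (h : IsArc A a b) : b ∈ A := h.symm.left_mem

theorem ne (h : IsArc A a b) : a ≠ b := by
  obtain ⟨f, -, hi, rfl, rfl, rfl⟩ := h
  exact fun h => zero_ne_one (hi (by simp) (by simp) h)

theorem isCompact (h : IsArc A a b) : IsCompact A := by
  obtain ⟨f, hf, -, -, -, rfl⟩ := h
  exact isCompact_Icc.image_of_continuousOn hf

theorem joinedIn (h : IsArc A a b) : JoinedIn A a b := by
  obtain ⟨f, hf, -, h0, h1, rfl⟩ := h
  exact JoinedIn.ofLine hf h0 h1 le_rfl

theorem split (h : IsArc A a b) (hx : x ∈ A) (hxa : x ≠ a) (hxb : x ≠ b) :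
    ∃ A₁ A₂, IsArc A₁ a x ∧ IsArc A₂ x b ∧ A₁ ∪ A₂ = A ∧ A₁ ∩ A₂ = {x} := by
  obtain ⟨f, hf, hi, rfl, rfl, rfl⟩ := h
  obtain ⟨t, ht, rfl⟩ := hx
  have ht₀ : 0 < t := ht.1.lt_of_ne' fun h => hxa (congrArg f h)
  have ht₁ : t < 1 := ht.2.lt_of_ne fun h => hxb (congrArg f h)
  have hl : Icc 0 t ⊆ Icc (0 : ℝ) 1 := Icc_subset_Icc le_rfl ht.2
  have hr : Icc t 1 ⊆ Icc (0 : ℝ) 1 := Icc_subset_Icc ht.1 le_rfl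
  refine ⟨f '' Icc 0 t, f '' Icc t 1, .of_Icc ht₀ (hf.mono hl) (hi.mono hl),
    .of_Icc ht₁ (hf.mono hr) (hi.mono hr), ?_, ?_⟩
  · rw [← image_union, Icc_union_Icc_eq_Icc ht.1 ht.2]
  · rw [← hi.image_inter hl hr, Icc_inter_Icc_eq_singleton ht.1 ht.2, image_singleton]

theorem union (hA : IsArc A a x) (hB : IsArc B x b) (hAB : A ∩ B ⊆ {x}) : IsArc (A ∪ B) a b := by
  obtain ⟨f, hf, hfi, rfl, hfx, rfl⟩ := hA
  obtain ⟨g, hg, hgi, rfl, rfl, rfl⟩ := hB.exists_param one_lt_two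
  obtain ⟨k, hk, hkf, hkg⟩ := exists_continuousOn_Icc_glue zero_le_one one_le_two hf hg hfx
  have hinj : InjOn k (Icc 0 2) := by
    rw [← Icc_union_Ioc_eq_Icc (zero_le_one (α := ℝ)) one_le_two,
      injOn_union (disjoint_left.2 fun t ht ht' => ht.2.not_gt ht'.1)]
    refine ⟨hkf.injOn_iff.2 hfi, (hkg.injOn_iff.2 hgi).mono Ioc_subset_Icc_self, ?_⟩
    intro s hs t ht hst
    rw [hkf hs, hkg (Ioc_subset_Icc_self ht)] at hst
    have hx : g t ∈ ({g 1} : Set X) :=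
      hAB ⟨hst ▸ mem_image_of_mem f hs, mem_image_of_mem g (Ioc_subset_Icc_self ht)⟩
    exact ht.1.ne' (hgi (Ioc_subset_Icc_self ht) (by simp) hx)
  have harc := IsArc.of_Icc two_pos hk hinj
  rwa [← Icc_union_Icc_eq_Icc (zero_le_one (α := ℝ)) one_le_two, image_union, hkf.image_eq,
    hkg.image_eq, hkf (by simp), hkg (by simp)] at harc

theorem exists_subset_inter_eq_singleton (h : IsArc A a b) (hF : IsClosed F) (ha : a ∉ F)
    (hAF : (A ∩ F).Nonempty) : ∃ p ∈ F, ∃ A' ⊆ A, IsArc A' a p ∧ A' ∩ F = {p} := by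
  obtain ⟨f, hf, hi, rfl, rfl, rfl⟩ := h
  have hK : IsClosed (Icc 0 1 ∩ f ⁻¹' F) := hf.preimage_isClosed_of_isClosed isClosed_Icc hF
  obtain ⟨_, ⟨s, hs, rfl⟩, hsF⟩ := hAF
  obtain ⟨t, ⟨ht, htF⟩, htmin⟩ :=
    (isCompact_Icc.of_isClosed_subset hK inter_subset_left).exists_isLeast ⟨s, hs, hsF⟩
  have ht₀ : 0 < t := ht.1.lt_of_ne' fun h => ha (h ▸ htF)
  have hsub : Icc 0 t ⊆ Icc (0 : ℝ) 1 := Icc_subset_Icc le_rfl ht.2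
  refine ⟨f t, htF, f '' Icc 0 t, image_mono hsub, .of_Icc ht₀ (hf.mono hsub) (hi.mono hsub),
    subset_antisymm ?_ ?_⟩
  · rintro _ ⟨⟨u, hu, rfl⟩, huF⟩
    exact congrArg f (hu.2.antisymm (htmin ⟨hsub hu, huF⟩))
  · exact singleton_subset_iff.2 ⟨mem_image_of_mem f ⟨ht₀.le, le_rfl⟩, htF⟩

end TopologicalSpace

theorem isClosed {X : Type*} [TopologicalSpace X] [T2Space X] {A : Set X} {a b : X}
    (h : IsArc A a b) : IsClosed A :=
  h.isCompact.isClosed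

end IsArc

variable {X : Type} [TopologicalSpace X] {A B J : Set X} {a b : X}

theorem isJordanCurve_image_Icc [T2Space X] {f : ℝ → X} (hf : ContinuousOn f (Icc 0 1))
    (hi : InjOn f (Ico 0 1)) (h : f 0 = f 1) : IsJordanCurve (f '' Icc 0 1) := by
  have : Fact (0 < (1 : ℝ)) := ⟨one_pos⟩
  have hlift : AddCircle.liftIco 1 0 f = (Ico 0 (0 + 1)).domRestrict f ∘ AddCircle.equivIco 1 0 :=
    rfl
  have hcont : Continuous (AddCircle.liftIco 1 0 f) :=
    AddCircle.liftIco_continuous (by simpa using h) (by simpa using hf)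
  have hinj : Function.Injective (AddCircle.liftIco 1 0 f) := by
    rw [hlift]
    exact (injOn_iff_injective.1 (by rwa [zero_add])).comp (Equiv.injective _)
  have hrange : range (AddCircle.liftIco 1 0 f) = f '' Icc 0 1 := by
    rw [hlift, (Equiv.surjective _).range_comp, range_domRestrict, zero_add,
      ← Ico_insert_right zero_le_one, image_insert_eq, ← h, insert_eq_of_mem]
    exact mem_image_of_mem f (by simp)
  exact ⟨(hcont.isClosedEmbedding hinj).isEmbedding.toHomeomorph.trans (.setCongr hrange)⟩

theorem IsArc.isJordanCurve_union [T2Space X] (hA : IsArc A a b) (hB : IsArc B a b)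
    (hAB : A ∩ B ⊆ {a, b}) : IsJordanCurve (A ∪ B) := by
  obtain ⟨f, hf, hfi, hfa, hfb, rfl⟩ := hA.exists_param (show (0 : ℝ) < 1 / 2 by norm_num)
  obtain ⟨g, hg, hgi, hgb, hga, rfl⟩ := hB.symm.exists_param (show (1 / 2 : ℝ) < 1 by norm_num)
  have h₀ : (0 : ℝ) ≤ 1 / 2 := by norm_num
  have h₁ : (1 / 2 : ℝ) ≤ 1 := by norm_num
  obtain ⟨k, hk, hkf, hkg⟩ := exists_continuousOn_Icc_glue h₀ h₁ hf hg (hfb.trans hgb.symm)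
  have hinj : InjOn k (Ico 0 1) := by
    rw [← Icc_union_Ioo_eq_Ico h₀ (by norm_num : (1 / 2 : ℝ) < 1),
      injOn_union (disjoint_left.2 fun t ht ht' => ht.2.not_gt ht'.1)]
    refine ⟨hkf.injOn_iff.2 hfi, (hkg.injOn_iff.2 hgi).mono Ioo_subset_Icc_self, ?_⟩
    intro s hs t ht hst
    have ht' := Ioo_subset_Icc_self ht
    rw [hkf hs, hkg ht'] at hst
    rcases hAB ⟨hst ▸ mem_image_of_mem f hs, mem_image_of_mem g ht'⟩ with h | h
    · exact ht.2.ne (hgi ht' (right_mem_Icc.2 h₁) (h.trans hga.symm))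
    · exact ht.1.ne' (hgi ht' (left_mem_Icc.2 h₁) (Eq.trans h hgb.symm))
  have hJ := isJordanCurve_image_Icc hk hinj <| by
    rw [hkf (left_mem_Icc.2 h₀), hkg (right_mem_Icc.2 h₁), hfa, hga]
  rwa [← Icc_union_Icc_eq_Icc h₀ h₁, image_union, hkf.image_eq, hkg.image_eq] at hJ

theorem IsJordanCurve.exists_param (hJ : IsJordanCurve J) (ha : a ∈ J) :
    ∃ F : ℝ → X, Continuous F ∧ F 0 = a ∧ F 1 = a ∧ InjOn F (Ico 0 1) ∧ InjOn F (Ioc 0 1) ∧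
      F '' Icc 0 1 = J := by
  obtain ⟨φ⟩ := hJ
  have : Fact (0 < (1 : ℝ)) := ⟨one_pos⟩
  let ψ : AddCircle (1 : ℝ) ≃ₜ J := (Homeomorph.addLeft (φ.symm ⟨a, ha⟩)).trans φ
  have hψ : Function.Injective fun x => (ψ x : X) := Subtype.val_injective.comp ψ.injective
  have h₀ : (ψ 0 : X) = a := by simp [ψ]
  refine ⟨fun t => ψ t, by fun_prop, h₀, by simpa [AddCircle.coe_period] using h₀,
    fun s hs t ht h => ?_, fun s hs t ht h => ?_, ?_⟩
  · rw [← zero_add (1 : ℝ)] at hs ht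
    exact congrArg Subtype.val ((AddCircle.equivIco 1 0).symm.injective (a₁ := ⟨s, hs⟩)
      (a₂ := ⟨t, ht⟩) (hψ h))
  · rw [← zero_add (1 : ℝ)] at hs ht
    exact congrArg Subtype.val ((AddCircle.equivIoc 1 0).symm.injective (a₁ := ⟨s, hs⟩)
      (a₂ := ⟨t, ht⟩) (hψ h))
  · have hI : ((↑) : ℝ → AddCircle (1 : ℝ)) '' Icc 0 1 = univ := by
      simpa using AddCircle.coe_image_Icc_eq (1 : ℝ) 0
    rw [← image_image (fun x => (ψ x : X)), hI, image_univ, ← Function.comp_def,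
      ψ.surjective.range_comp, Subtype.range_coe]

theorem IsJordanCurve.split (hJ : IsJordanCurve J) (ha : a ∈ J) (hb : b ∈ J) (hab : a ≠ b) :
    ∃ A B, IsArc A a b ∧ IsArc B a b ∧ A ∪ B = J ∧ A ∩ B ⊆ {a, b} := by
  obtain ⟨F, hF, rfl, hF₁, hIco, hIoc, rfl⟩ := hJ.exists_param ha
  obtain ⟨s, hs, rfl⟩ := hb
  have hs₀ : 0 < s := hs.1.lt_of_ne fun h => hab (congrArg F h)
  have hs₁ : s < 1 := hs.2.lt_of_ne fun h => hab (h ▸ hF₁.symm)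
  have hl : Icc 0 s ⊆ Ico (0 : ℝ) 1 := Icc_subset_Ico_right hs₁
  have hA := IsArc.of_Icc hs₀ hF.continuousOn (hIco.mono hl)
  have hB := IsArc.of_Icc hs₁ hF.continuousOn (hIoc.mono (Icc_subset_Ioc_left hs₀))
  refine ⟨_, _, hA, hF₁ ▸ hB.symm, ?_, ?_⟩
  · rw [← image_union, Icc_union_Icc_eq_Icc hs.1 hs.2]
  · rintro _ ⟨⟨t, ht, rfl⟩, u, hu, hut⟩
    rcases hu.2.eq_or_lt with rfl | hu₁
    · exact .inl (hut ▸ hF₁)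
    · have htu : u = t := hIco ⟨hs.1.trans hu.1, hu₁⟩ (hl ht) hut
      exact .inr (congrArg F (ht.2.antisymm (htu ▸ hu.1)))

end Arc

/-! ### Paths contain arcs -/

section PathToArc

open Filter Topology

theorem isPreconnected_image_iInter_of_directed {X Y ι : Type*} [TopologicalSpace X]
    [TopologicalSpace Y] [T2Space X] [T2Space Y] [NormalSpace Y] [Nonempty ι] {K : ι → Set X}
    {f : X → Y} (hf : Continuous f) (hd : Directed (· ⊇ ·) K) (hK : ∀ i, IsCompact (K i))
    (hfK : ∀ i, IsPreconnected (f '' K i)) : IsPreconnected (f '' ⋂ i, K i) := by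
  have hcpt : IsCompact (f '' ⋂ i, K i) :=
    ((hK (Classical.arbitrary ι)).of_isClosed_subset (isClosed_iInter fun i => (hK i).isClosed)
      (iInter_subset K _)).image hf
  refine (isPreconnected_iff_subset_of_fully_disjoint_closed hcpt.isClosed).2
    fun u v hu hv huv hdisj => ?_
  obtain ⟨U, V, hU, hV, huU, hvV, hUV⟩ :=
    NormalSpace.normal u v hu hv hdisj
  obtain ⟨i, hi⟩ : ∃ i, K i ⊆ f ⁻¹' (U ∪ V) :=
    exists_subset_nhds_of_isCompact hd hK fun x hx =>
      ((hU.union hV).preimage hf).mem_nhds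
        (union_subset_union huU hvV (huv (mem_image_of_mem f hx)))
  have hsub : f '' ⋂ i, K i ⊆ f '' K i := image_mono (iInter_subset K i)
  refine ((hfK i).subset_or_subset hU hV hUV (image_subset_iff.2 hi)).imp (fun h y hy => ?_)
    fun h y hy => ?_
  · exact (huv hy).resolve_right fun hyv => hUV.le_bot ⟨h (hsub hy), hvV hyv⟩
  · exact (huv hy).resolve_left fun hyu => hUV.le_bot ⟨huU hyu, h (hsub hy)⟩

theorem exists_continuousOn_factor {T X Y : Type*} [TopologicalSpace T] [TopologicalSpace X]
    [TopologicalSpace Y] [T2Space X] [Nonempty T] {K : Set T} {f : T → X} {g : T → Y}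
    (hK : IsCompact K) (hf : ContinuousOn f K) (hg : ContinuousOn g K)
    (hfg : ∀ s ∈ K, ∀ t ∈ K, f s = f t → g s = g t) :
    ∃ φ : X → Y, ContinuousOn φ (f '' K) ∧ ∀ t ∈ K, φ (f t) = g t := by
  have hφ : ∀ t ∈ K, g (Function.invFunOn f K (f t)) = g t := fun t ht =>
    hfg _ (Function.invFunOn_apply_mem ht) _ ht (Function.invFunOn_apply_eq ht)
  refine ⟨g ∘ Function.invFunOn f K, continuousOn_iff_isClosed.2 fun C hC => ?_, hφ⟩
  obtain ⟨D, hD, hDK⟩ := continuousOn_iff_isClosed.1 hg C hC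
  refine ⟨f '' (D ∩ K), ((hK.inter_left hD).image_of_continuousOn
    (hf.mono inter_subset_right)).isClosed, ?_⟩
  rw [inter_eq_left.2 (image_mono inter_subset_right), ← hDK]
  ext x
  constructor
  · rintro ⟨hx, t, ht, rfl⟩
    exact ⟨t, ⟨by simpa only [mem_preimage, Function.comp_apply, hφ t ht] using hx, ht⟩, rfl⟩
  · rintro ⟨t, ⟨htC, ht⟩, rfl⟩
    exact ⟨by simpa only [mem_preimage, Function.comp_apply, hφ t ht] using htC,
      mem_image_of_mem f ht⟩

/-- A closed set `K` of times, containing `0` and `1`, such that `γ` restricted to the part of `K`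
between any two of its times still has a connected image. A minimal one has lost all loops
of `γ`. -/
structure IsPruning {X : Type*} [TopologicalSpace X] (γ : ℝ → X) (K : Set ℝ) : Prop where
  isClosed : IsClosed K
  subset_Icc : K ⊆ Icc 0 1
  zero_mem : 0 ∈ K
  one_mem : 1 ∈ K
  isPreconnected : ∀ s ∈ K, ∀ t ∈ K, IsPreconnected (γ '' (K ∩ Icc s t))

namespace IsPruning

variable {X : Type*}

theorem of_continuous [TopologicalSpace X] {γ : ℝ → X} (hγ : Continuous γ) :
    IsPruning γ (Icc 0 1) where
  isClosed := isClosed_Icc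
  subset_Icc := Subset.rfl
  zero_mem := by simp
  one_mem := by simp
  isPreconnected s _ t _ := by
    rw [Icc_inter_Icc]
    exact isPreconnected_Icc.image _ hγ.continuousOn

theorem isCompact [TopologicalSpace X] {γ : ℝ → X} {K : Set ℝ} (h : IsPruning γ K) :
    IsCompact K :=
  isCompact_Icc.of_isClosed_subset h.isClosed h.subset_Icc

theorem diff_Ioo [TopologicalSpace X] {γ : ℝ → X} {K : Set ℝ} {s t : ℝ} (h : IsPruning γ K)
    (hs : s ∈ K) (ht : t ∈ K) (hγ : γ s = γ t) : IsPruning γ (K \ Ioo s t) where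
  isClosed := h.isClosed.sdiff isOpen_Ioo
  subset_Icc := sdiff_subset.trans h.subset_Icc
  zero_mem := ⟨h.zero_mem, fun h₀ => (h.subset_Icc hs).1.not_gt h₀.1⟩
  one_mem := ⟨h.one_mem, fun h₁ => (h.subset_Icc ht).2.not_gt h₁.2⟩
  isPreconnected p hp q hq := by
    have hout : ∀ x, x ∉ Ioo s t → x ≤ s ∨ t ≤ x := fun x hx => by
      by_contra! h
      exact hx h
    by_cases hgap : p ≤ s ∧ s < t ∧ t ≤ q
    · obtain ⟨hps, hst, htq⟩ := hgap
      have hunion : K \ Ioo s t ∩ Icc p q = K ∩ Icc p s ∪ K ∩ Icc t q := by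
        ext x
        have := hout x
        simp only [mem_inter_iff, Set.mem_sdiff, mem_Ioo, mem_Icc, mem_union] at this ⊢
        grind
      rw [hunion, image_union]
      exact (h.isPreconnected p hp.1 s hs).union (γ s) ⟨s, ⟨hs, hps, le_rfl⟩, rfl⟩
        ⟨t, ⟨ht, le_rfl, htq⟩, hγ.symm⟩ (h.isPreconnected t ht q hq.1)
    · have hdisj : Disjoint (Icc p q) (Ioo s t) := by
        rw [Set.disjoint_left]
        have := hout p hp.2
        have := hout q hq.2
        simp only [mem_Icc, mem_Ioo]
        grind
      rw [sdiff_inter_right_comm, (hdisj.mono_left inter_subset_right).sdiff_eq_left]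
      exact h.isPreconnected p hp.1 q hq.1

end IsPruning

variable {X : Type*} [MetricSpace X] {γ : ℝ → X} {K : Set ℝ}

theorem exists_isPruning_forall_disjoint_Ioo (hγ : Continuous γ) : ∃ K, IsPruning γ K ∧
    ∀ s ∈ K, ∀ t ∈ K, γ s = γ t → Disjoint K (Ioo s t) := by
  obtain ⟨K, hK⟩ := zorn_superset {K | IsPruning γ K} fun c hc hchain => by
    rcases c.eq_empty_or_nonempty with rfl | hne
    · exact ⟨Icc 0 1, .of_continuous hγ, by simp⟩
    have : Nonempty c := hne.to_subtype
    have hsub : ∀ L ∈ c, ⋂₀ c ⊆ L := fun L => sInter_subset_of_mem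
    obtain ⟨L₀, hL₀⟩ := hne
    refine ⟨⋂₀ c, ⟨isClosed_sInter fun L hL => (hc hL).isClosed,
      (hsub L₀ hL₀).trans (hc hL₀).subset_Icc, fun L hL => (hc hL).zero_mem,
      fun L hL => (hc hL).one_mem, fun s hs t ht => ?_⟩, hsub⟩
    rw [sInter_eq_iInter, iInter_inter]
    refine isPreconnected_image_iInter_of_directed hγ ?_
      (fun L => (hc L.2).isCompact.inter_right isClosed_Icc)
      fun L => (hc L.2).isPreconnected s (hs _ L.2) t (ht _ L.2)
    exact fun L M => (hchain.total L.2 M.2).elim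
      (fun h => ⟨L, Subset.rfl, inter_subset_inter_left _ h⟩)
      fun h => ⟨M, inter_subset_inter_left _ h, Subset.rfl⟩
  refine ⟨K, hK.prop, fun s hs t ht hst => ?_⟩
  exact (disjoint_sdiff_left.mono_left (hK.le_of_le (hK.prop.diff_Ioo hs ht hst) sdiff_subset))

theorem infDist_image_inter_Iic_anti {s t : ℝ} (hs : s ∈ K) (hst : s ≤ t) (x : X) :
    infDist x (γ '' (K ∩ Iic t)) ≤ infDist x (γ '' (K ∩ Iic s)) :=
  infDist_le_infDist_of_subset (image_mono (inter_subset_inter_right K (Iic_subset_Iic.2 hst)))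
    ⟨γ s, mem_image_of_mem γ ⟨hs, self_mem_Iic⟩⟩

theorem infDist_image_inter_Iic_le_add {ε δ s t : ℝ} (hε : 0 ≤ ε)
    (hδ : ∀ u ∈ K, ∀ v ∈ K, dist u v < δ → dist (γ u) (γ v) ≤ ε) (hs : s ∈ K) (ht : t ∈ K)
    (hst : dist s t < δ) (x : X) :
    infDist x (γ '' (K ∩ Iic s)) ≤ infDist x (γ '' (K ∩ Iic t)) + ε := by
  have hle := fun {u} (hu : u ∈ K ∩ Iic s) =>
    infDist_le_dist_of_mem (x := x) (mem_image_of_mem γ hu)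
  have hne : (K ∩ Iic t).Nonempty := ⟨t, ht, self_mem_Iic⟩
  rw [← sub_le_iff_le_add, le_infDist (hne.image γ)]
  rintro _ ⟨u, ⟨hu, hut⟩, rfl⟩
  rw [sub_le_iff_le_add]
  rcases le_total u s with hus | hsu
  · linarith [hle ⟨hu, hus⟩]
  · have hdist : dist u s < δ := by
      rw [dist_comm] at hst
      rw [Real.dist_eq, abs_of_nonneg] at hst ⊢ <;> linarith [mem_Iic.1 hut]
    calc infDist x (γ '' (K ∩ Iic s))
        ≤ dist x (γ s) := hle ⟨hs, self_mem_Iic⟩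
      _ ≤ dist x (γ u) + dist (γ u) (γ s) := dist_triangle ..
      _ ≤ dist x (γ u) + ε := by gcongr; exact hδ u hu s hs hdist

/-- The mean distance of the path `γ` from the part of its pruned image `γ '' K` that has been
traversed up to time `t`. It decreases exactly when the pruned path moves. -/
noncomputable def meanDistTraversed (γ : ℝ → X) (K : Set ℝ) (t : ℝ) : ℝ :=
  ∫ q in (0 : ℝ)..1, infDist (γ q) (γ '' (K ∩ Iic t))

theorem continuous_infDist_comp (hγ : Continuous γ) (S : Set X) :
    Continuous fun q => infDist (γ q) S :=
  (continuous_infDist_pt S).comp hγ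

theorem antitoneOn_meanDistTraversed (hγ : Continuous γ) :
    AntitoneOn (meanDistTraversed γ K) K := fun _ hs _ _ hst =>
  intervalIntegral.integral_mono_on zero_le_one
    ((continuous_infDist_comp hγ _).intervalIntegrable 0 1)
    ((continuous_infDist_comp hγ _).intervalIntegrable 0 1)
    fun q _ => infDist_image_inter_Iic_anti hs hst (γ q)

theorem continuousOn_meanDistTraversed (hγ : Continuous γ) (hK : IsCompact K) :
    ContinuousOn (meanDistTraversed γ K) K := by
  refine Metric.continuousOn_iff.2 fun t ht ε hε => ?_
  obtain ⟨δ, hδ, h⟩ := Metric.uniformContinuousOn_iff_le.1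
    (hK.uniformContinuousOn_of_continuous hγ.continuousOn) (ε / 2) (half_pos hε)
  have hle := fun {u v} (hu : u ∈ K) (hv : v ∈ K) (huv : dist u v < δ) =>
    infDist_image_inter_Iic_le_add (half_pos hε).le
      (fun u hu v hv huv => h u hu v hv huv.le) hu hv huv
  refine ⟨δ, hδ, fun s hs hst => LE.le.trans_lt ?_ (half_lt_self hε)⟩
  rw [Real.dist_eq, meanDistTraversed, meanDistTraversed, ← intervalIntegral.integral_sub
    ((continuous_infDist_comp hγ _).intervalIntegrable 0 1)
    ((continuous_infDist_comp hγ _).intervalIntegrable 0 1)]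
  have hbound : ∀ q ∈ uIoc (0 : ℝ) 1, ‖infDist (γ q) (γ '' (K ∩ Iic s)) -
      infDist (γ q) (γ '' (K ∩ Iic t))‖ ≤ ε / 2 := fun q _ => by
    rw [Real.norm_eq_abs, abs_sub_le_iff]
    constructor <;> rw [sub_le_iff_le_add']
    · exact hle hs ht hst (γ q)
    · exact hle ht hs (by rwa [dist_comm]) (γ q)
  simpa using intervalIntegral.norm_integral_le_of_norm_le_const hbound

theorem IsPruning.meanDistTraversed_eq_iff (hγ : Continuous γ) (hK : IsPruning γ K)
    (hinj : ∀ s ∈ K, ∀ t ∈ K, γ s = γ t → Disjoint K (Ioo s t)) {s t : ℝ} (hs : s ∈ K)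
    (ht : t ∈ K) (hst : s ≤ t) :
    meanDistTraversed γ K s = meanDistTraversed γ K t ↔ γ s = γ t := by
  refine ⟨fun h => ?_, fun h => ?_⟩
  · by_contra hne
    have hfar : γ t ∉ γ '' (K ∩ Iic s) := by
      rintro ⟨u, ⟨hu, hus⟩, hut⟩
      rcases (mem_Iic.1 hus).eq_or_lt with rfl | hus
      · exact hne hut
      · rcases hst.eq_or_lt with rfl | hst
        · exact hne rfl
        · exact Set.disjoint_left.1 (hinj u hu t ht hut) hs ⟨hus, hst⟩
    have hcl : IsClosed (γ '' (K ∩ Iic s)) :=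
      ((hK.isCompact.inter_right isClosed_Iic).image hγ).isClosed
    refine h.not_gt (intervalIntegral.integral_lt_integral_of_continuousOn_of_le_of_exists_lt
      zero_lt_one (continuous_infDist_comp hγ _).continuousOn
      (continuous_infDist_comp hγ _).continuousOn
      (fun q _ => infDist_image_inter_Iic_anti hs hst (γ q)) ⟨t, hK.subset_Icc ht, ?_⟩)
    have hne : (K ∩ Iic s).Nonempty := ⟨s, hs, self_mem_Iic⟩
    have ht₀ : γ t ∈ γ '' (K ∩ Iic t) := mem_image_of_mem γ ⟨ht, self_mem_Iic⟩
    rw [infDist_zero_of_mem ht₀]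
    exact (hcl.notMem_iff_infDist_pos (hne.image γ)).1 hfar
  · have himg : γ '' (K ∩ Iic s) = γ '' (K ∩ Iic t) := by
      refine (image_mono (inter_subset_inter_right K (Iic_subset_Iic.2 hst))).antisymm ?_
      rintro _ ⟨u, ⟨hu, hut⟩, rfl⟩
      rcases le_or_gt u s with hus | hsu
      · exact mem_image_of_mem γ ⟨hu, hus⟩
      · rcases (mem_Iic.1 hut).eq_or_lt with rfl | hut
        · exact ⟨s, ⟨hs, self_mem_Iic⟩, h⟩
        · exact (Set.disjoint_left.1 (hinj s hs t ht h) hu ⟨hsu, hut⟩).elim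
    rw [meanDistTraversed, meanDistTraversed, himg]

theorem IsPruning.exists_parameter (hγ : Continuous γ) (hK : IsPruning γ K)
    (hinj : ∀ s ∈ K, ∀ t ∈ K, γ s = γ t → Disjoint K (Ioo s t)) :
    ∃ w : ℝ → ℝ, ContinuousOn w K ∧ MonotoneOn w K ∧
      ∀ s ∈ K, ∀ t ∈ K, w s = w t ↔ γ s = γ t := by
  refine ⟨fun t => -meanDistTraversed γ K t,
    (continuousOn_meanDistTraversed hγ hK.isCompact).neg,
    (antitoneOn_meanDistTraversed hγ).neg, fun s hs t ht => neg_inj.trans ?_⟩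
  rcases le_total s t with hst | hts
  · exact hK.meanDistTraversed_eq_iff hγ hinj hs ht hst
  · rw [eq_comm, hK.meanDistTraversed_eq_iff hγ hinj ht hs hts, eq_comm]

theorem IsPruning.isArc_image (hγ : Continuous γ) (hK : IsPruning γ K) (hne : γ 0 ≠ γ 1)
    (hinj : ∀ s ∈ K, ∀ t ∈ K, γ s = γ t → Disjoint K (Ioo s t)) :
    IsArc (γ '' K) (γ 0) (γ 1) := by
  obtain ⟨w, hw, hmono, hwγ⟩ := hK.exists_parameter hγ hinj
  obtain ⟨v, hv, hvγ⟩ := exists_continuousOn_factor hK.isCompact hγ.continuousOn hw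
    fun s hs t ht => (hwγ s hs t ht).2
  obtain ⟨f, hf, hfw⟩ := exists_continuousOn_factor hK.isCompact hw hγ.continuousOn
    fun s hs t ht => (hwγ s hs t ht).1
  have hconn : IsPreconnected (w '' K) := by
    have hγK : IsPreconnected (γ '' K) := by
      simpa [inter_eq_left.2 hK.subset_Icc] using hK.isPreconnected 0 hK.zero_mem 1 hK.one_mem
    rw [← image_congr hvγ, ← image_image v]
    exact hγK.image v hv
  have hwK : w '' K = Icc (w 0) (w 1) := by
    refine subset_antisymm ?_ (hconn.Icc_subset (mem_image_of_mem w hK.zero_mem)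
      (mem_image_of_mem w hK.one_mem))
    rintro _ ⟨t, ht, rfl⟩
    exact ⟨hmono hK.zero_mem ht (hK.subset_Icc ht).1, hmono ht hK.one_mem (hK.subset_Icc ht).2⟩
  have hfi : InjOn f (w '' K) := by
    rintro _ ⟨s, hs, rfl⟩ _ ⟨t, ht, rfl⟩ h
    exact (hwγ s hs t ht).2 ((hfw s hs).symm.trans (h.trans (hfw t ht)))
  have hlt : w 0 < w 1 := (hmono hK.zero_mem hK.one_mem zero_le_one).lt_of_ne fun h =>
    hne ((hwγ 0 hK.zero_mem 1 hK.one_mem).1 h)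
  have himg : f '' (w '' K) = γ '' K := by rw [image_image, image_congr hfw]
  rw [hwK] at hf hfi himg
  simpa only [himg, hfw 0 hK.zero_mem, hfw 1 hK.one_mem] using IsArc.of_Icc hlt hf hfi

theorem exists_isArc_of_joinedIn {S : Set X} {a b : X} (h : JoinedIn S a b) (hab : a ≠ b) :
    ∃ A ⊆ S, IsArc A a b := by
  have hγ : Continuous h.somePath.extend := h.somePath.continuous_extend
  obtain ⟨K, hK, hinj⟩ := exists_isPruning_forall_disjoint_Ioo hγ
  refine ⟨h.somePath.extend '' K, ?_, ?_⟩
  · rintro _ ⟨t, ht, rfl⟩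
    rw [h.somePath.extend_apply (hK.subset_Icc ht)]
    exact h.somePath_mem _
  · simpa using hK.isArc_image hγ (by simpa using hab) hinj

end PathToArc

/-! ### Cyclicly connected sets -/

section CyclicElements

variable {X : Type} [TopologicalSpace X] {A F J P S T : Set X} {a b y : X}

theorem IsArc.exists_mem_ne_ne (h : IsArc A a b) : ∃ c ∈ A, c ≠ a ∧ c ≠ b := by
  obtain ⟨f, -, hi, rfl, rfl, rfl⟩ := h
  have h₂ : (1 / 2 : ℝ) ∈ Icc (0 : ℝ) 1 := by norm_num
  exact ⟨f (1 / 2), mem_image_of_mem f h₂, (hi.ne_iff h₂ (by simp)).2 (by norm_num),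
    (hi.ne_iff h₂ (by simp)).2 (by norm_num)⟩

theorem CyclicallyConnected.exists_isArc (hT : CyclicallyConnected T) (ha : a ∈ T) (hb : b ∈ T)
    (hab : a ≠ b) : ∃ B ⊆ T, IsArc B a b := by
  obtain ⟨J, hJT, hJ, haJ, hbJ⟩ := hT a ha b hb
  obtain ⟨A, B, hA, -, hAB, -⟩ := hJ.split haJ hbJ hab
  exact ⟨A, (subset_union_left.trans hAB.subset).trans hJT, hA⟩

theorem IsJordanCurve.exists_isArc_mem (hJ : IsJordanCurve J) (ha : a ∈ J) (hb : b ∈ J)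
    (hy : y ∈ J) (hab : a ≠ b) : ∃ B ⊆ J, IsArc B a b ∧ y ∈ B := by
  obtain ⟨A, B, hA, hB, rfl, -⟩ := hJ.split ha hb hab
  rcases hy with hy | hy
  · exact ⟨A, subset_union_left, hA, hy⟩
  · exact ⟨B, subset_union_right, hB, hy⟩

theorem CyclicallyConnected.exists_isArc_inter_eq_singleton (hT : CyclicallyConnected T)
    (hF : IsClosed F) (hb : b ∈ T \ F) (hy : y ∈ T ∩ F) (hab : a ≠ b) (hay : a ≠ y) :
    ∃ p ∈ F, p ≠ a ∧ ∃ B ⊆ T, IsArc B b p ∧ B ∩ F = {p} := by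
  obtain ⟨J, hJT, hJ, hbJ, hyJ⟩ := hT b hb.1 y hy.1
  obtain ⟨A₁, A₂, h₁, h₂, rfl, h₁₂⟩ := hJ.split hbJ hyJ fun h => hb.2 (h ▸ hy.2)
  obtain ⟨p₁, hp₁, B₁, hBA₁, hB₁, hBF₁⟩ :=
    h₁.exists_subset_inter_eq_singleton hF hb.2 ⟨y, h₁.right_mem, hy.2⟩
  obtain ⟨p₂, hp₂, B₂, hBA₂, hB₂, hBF₂⟩ :=
    h₂.exists_subset_inter_eq_singleton hF hb.2 ⟨y, h₂.right_mem, hy.2⟩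
  by_cases hpa₁ : p₁ = a
  · refine ⟨p₂, hp₂, fun hpa₂ => ?_, B₂, hBA₂.trans (subset_union_right.trans hJT), hB₂, hBF₂⟩
    exact (h₁₂ ⟨hBA₁ (hpa₁ ▸ hB₁.right_mem), hBA₂ (hpa₂ ▸ hB₂.right_mem)⟩).elim hab hay
  · exact ⟨p₁, hp₁, hpa₁, B₁, hBA₁.trans (subset_union_left.trans hJT), hB₁, hBF₁⟩

theorem CyclicallyConnected.joinedIn (hT : CyclicallyConnected T) (ha : a ∈ T) (hb : b ∈ T) :
    JoinedIn T a b := by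
  by_cases hab : a = b
  · exact hab ▸ JoinedIn.refl ha
  · obtain ⟨B, hBT, hB⟩ := hT.exists_isArc ha hb hab
    exact hB.joinedIn.mono hBT

theorem cyclicallyConnected_sUnion {c : Set (Set X)} (hc : ∀ C ∈ c, CyclicallyConnected C)
    (hd : DirectedOn (· ⊆ ·) c) : CyclicallyConnected (⋃₀ c) := by
  rintro x ⟨C, hC, hxC⟩ y ⟨D, hD, hyD⟩
  obtain ⟨E, hE, hCE, hDE⟩ := hd C hC D hD
  obtain ⟨J, hJE, hJ⟩ := hc E hE x (hCE hxC) y (hDE hyD)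
  exact ⟨J, hJE.trans (subset_sUnion_of_mem hE), hJ⟩

theorem CyclicallyConnected.exists_maximalCyclic (hT : CyclicallyConnected T)
    (hne : ¬ T.Subsingleton) : ∃ S, MaximalCyclic S ∧ T ⊆ S := by
  obtain ⟨S, hTS, hS, hmax⟩ := zorn_subset_nonempty {C : Set X | CyclicallyConnected C}
    (fun c hc hch _ => ⟨⋃₀ c, cyclicallyConnected_sUnion hc hch.directedOn,
      fun C => subset_sUnion_of_mem⟩) T hT
  exact ⟨S, ⟨fun h => hne (h.anti hTS), hS, fun C hC hSC => (hmax hC hSC).antisymm hSC⟩, hTS⟩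

variable [T2Space X]

theorem IsJordanCurve.isClosed (hJ : IsJordanCurve J) : IsClosed J := by
  obtain ⟨e⟩ := hJ
  have : CompactSpace J := e.compactSpace
  exact (isCompact_iff_compactSpace.2 this).isClosed

theorem CyclicallyConnected.exists_isArc_mem (hT : CyclicallyConnected T) (ha : a ∈ T)
    (hb : b ∈ T) (hy : y ∈ T) (hab : a ≠ b) : ∃ B ⊆ T, IsArc B a b ∧ y ∈ B := by
  rcases eq_or_ne a y with rfl | hay
  · obtain ⟨B, hBT, hB⟩ := hT.exists_isArc ha hb hab
    exact ⟨B, hBT, hB, hB.left_mem⟩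
  obtain ⟨J, hJT, hJ, haJ, hyJ⟩ := hT a ha y hy
  by_cases hbJ : b ∈ J
  · obtain ⟨B, hBJ, hB, hyB⟩ := hJ.exists_isArc_mem haJ hbJ hyJ hab
    exact ⟨B, hBJ.trans hJT, hB, hyB⟩
  obtain ⟨p, hpJ, hpa, B, hBT, hB, hBJ⟩ :=
    hT.exists_isArc_inter_eq_singleton hJ.isClosed ⟨hb, hbJ⟩ ⟨hy, hyJ⟩ hab hay
  obtain ⟨C, hCJ, hC, hyC⟩ := hJ.exists_isArc_mem haJ hpJ hyJ hpa.symm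
  refine ⟨C ∪ B, union_subset (hCJ.trans hJT) hBT, hC.union hB.symm ?_, Or.inl hyC⟩
  rw [← hBJ, inter_comm]
  exact inter_subset_inter_right _ hCJ

theorem CyclicallyConnected.union_isArc (hT : CyclicallyConnected T) (ha : a ∈ T) (hb : b ∈ T)
    (hA : IsArc A a b) (hAT : A ∩ T ⊆ {a, b}) : CyclicallyConnected (T ∪ A) := by
  have key : ∀ y ∈ T, ∃ J ⊆ T ∪ A, IsJordanCurve J ∧ A ⊆ J ∧ y ∈ J := by
    intro y hy
    obtain ⟨B, hBT, hB, hyB⟩ := hT.exists_isArc_mem ha hb hy hA.ne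
    exact ⟨A ∪ B, union_subset subset_union_right (hBT.trans subset_union_left),
      hA.isJordanCurve_union hB ((inter_subset_inter_right _ hBT).trans hAT),
      subset_union_left, Or.inr hyB⟩
  rintro x (hx | hx) y (hy | hy)
  · obtain ⟨J, hJT, hJ⟩ := hT x hx y hy
    exact ⟨J, hJT.trans subset_union_left, hJ⟩
  · obtain ⟨J, hJT, hJ, hAJ, hxJ⟩ := key x hx
    exact ⟨J, hJT, hJ, hxJ, hAJ hy⟩
  · obtain ⟨J, hJT, hJ, hAJ, hyJ⟩ := key y hy
    exact ⟨J, hJT, hJ, hAJ hx, hyJ⟩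
  · obtain ⟨J, hJT, hJ, hAJ, -⟩ := key a ha
    exact ⟨J, hJT, hJ, hAJ hx, hAJ hy⟩

/-- No arc joins two points of `P` through the complement of `P`. -/
def NoChord (P : Set X) : Prop :=
  ∀ u ∈ P, ∀ v ∈ P, ∀ A, IsArc A u v → ¬ A ∩ P ⊆ {u, v}

theorem MaximalCyclic.noChord (hT : MaximalCyclic T) : NoChord T := by
  intro u hu v hv A hA hAT
  have h := hT.2.2 _ (hT.2.1.union_isArc hu hv hA hAT) subset_union_left
  obtain ⟨c, hc, hcu, hcv⟩ := hA.exists_mem_ne_ne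
  rcases hAT ⟨hc, h ▸ Or.inr hc⟩ with h | h
  · exact hcu h
  · exact hcv h

theorem NoChord.subset_of_cyclicallyConnected (hP : NoChord P) (hPc : IsClosed P)
    (hT : CyclicallyConnected T) (ha : a ∈ T ∩ P) (hb : b ∈ T ∩ P) (hab : a ≠ b) : T ⊆ P := by
  intro x hx
  by_contra hxP
  obtain ⟨B, -, hB, hxB⟩ := hT.exists_isArc_mem ha.1 hb.1 hx hab
  obtain ⟨A₁, A₂, h₁, h₂, -, h₁₂⟩ := hB.split hxB (fun h => hxP (h ▸ ha.2))
    (fun h => hxP (h ▸ hb.2))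
  obtain ⟨p, hp, B₁, hB₁, hB₁', hB₁P⟩ :=
    h₁.symm.exists_subset_inter_eq_singleton hPc hxP ⟨a, h₁.left_mem, ha.2⟩
  obtain ⟨q, hq, B₂, hB₂, hB₂', hB₂P⟩ :=
    h₂.exists_subset_inter_eq_singleton hPc hxP ⟨b, h₂.right_mem, hb.2⟩
  refine hP p hp q hq _ (hB₁'.symm.union hB₂' ((inter_subset_inter hB₁ hB₂).trans h₁₂.subset)) ?_
  rw [union_inter_distrib_right, hB₁P, hB₂P]
  rfl

theorem MaximalCyclic.inter_subsingleton (hS : MaximalCyclic S) (hSc : IsClosed S)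
    (hT : MaximalCyclic T) (hne : S ≠ T) : (T ∩ S).Subsingleton := by
  intro a ha b hb
  by_contra hab
  exact hne (hT.2.2 S hS.2.1
    (hS.noChord.subset_of_cyclicallyConnected hSc hT.2.1 ha hb hab))

theorem exists_joinedIn_inter_insert_compl {Y : Type*} [MetricSpace Y] {P W : Set Y} {x y : Y}
    (h : JoinedIn W x y) (hP : IsClosed P) (hy : y ∈ P) :
    ∃ p ∈ P, p ∈ W ∧ JoinedIn (W ∩ insert p Pᶜ) x p := by
  by_cases hx : x ∈ P
  · exact ⟨x, hx, h.source_mem, JoinedIn.refl ⟨h.source_mem, mem_insert x _⟩⟩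
  obtain ⟨A, hAW, hA⟩ := exists_isArc_of_joinedIn h fun hxy => hx (hxy ▸ hy)
  obtain ⟨p, hp, B, hBA, hB, hBP⟩ :=
    hA.exists_subset_inter_eq_singleton hP hx ⟨y, hA.right_mem, hy⟩
  refine ⟨p, hp, hAW (hBA hB.right_mem), hB.joinedIn.mono fun z hz => ⟨hAW (hBA hz), ?_⟩⟩
  exact or_iff_not_imp_right.2 fun hzP => hBP.subset ⟨hz, not_not.1 hzP⟩

end CyclicElements

/-! ### Retraction onto a chordless set -/

section ChordlessRetraction

open Filter Topology

variable {X : Type} [MetricSpace X] {P Q S W : Set X} {p x y : X}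

open Classical in
/-- The point of `P` at which paths from `x` to `P` arrive; the junk value `x` is taken only if no
path leads from `x` to `P`. -/
noncomputable def entryPoint (P : Set X) (x : X) : X :=
  if h : ∃ p ∈ P, JoinedIn (insert p Pᶜ) x p then h.choose else x

theorem entryPoint_spec [PathConnectedSpace X] (hP : IsClosed P) (hne : P.Nonempty) (x : X) :
    entryPoint P x ∈ P ∧ JoinedIn (insert (entryPoint P x) Pᶜ) x (entryPoint P x) := by
  have h : ∃ p ∈ P, JoinedIn (insert p Pᶜ) x p := by
    obtain ⟨t, ht⟩ := hne
    obtain ⟨p, hp, -, h⟩ := exists_joinedIn_inter_insert_compl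
      (joinedIn_univ.2 (PathConnectedSpace.joined x t)) hP ht
    exact ⟨p, hp, h.mono inter_subset_right⟩
  rw [entryPoint, dif_pos h]
  exact h.choose_spec

namespace NoChord

theorem entryPoint_eq (hP : NoChord P) (hp : p ∈ P) (h : JoinedIn (insert p Pᶜ) x p) :
    entryPoint P x = p := by
  have h' : ∃ p ∈ P, JoinedIn (insert p Pᶜ) x p := ⟨p, hp, h⟩
  rw [entryPoint, dif_pos h']
  obtain ⟨hq, hxq⟩ := h'.choose_spec
  set q := h'.choose
  by_contra hqp
  have hqp' : JoinedIn ({q, p} ∪ Pᶜ) q p :=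
    (hxq.symm.mono (by grind)).trans (h.mono (by grind))
  obtain ⟨A, hA, hA'⟩ := exists_isArc_of_joinedIn hqp' hqp
  exact hP q hq p hp A hA' fun z hz => (hA hz.1).resolve_right fun h => h hz.2

theorem entryPoint_of_mem (hP : NoChord P) (hx : x ∈ P) : entryPoint P x = x :=
  hP.entryPoint_eq hx (JoinedIn.refl (mem_insert x _))

theorem entryPoint_mem_of_joinedIn (hP : NoChord P) (hPc : IsClosed P) (h : JoinedIn W x y)
    (hy : y ∈ P) : entryPoint P x ∈ W := by
  obtain ⟨p, hp, hpW, h⟩ := exists_joinedIn_inter_insert_compl h hPc hy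
  rwa [hP.entryPoint_eq hp (h.mono inter_subset_right)]

variable [PathConnectedSpace X]

theorem entryPoint_eq_of_joinedIn (hP : NoChord P) (hPc : IsClosed P) (hne : P.Nonempty)
    (h : JoinedIn Pᶜ x y) : entryPoint P x = entryPoint P y :=
  hP.entryPoint_eq (entryPoint_spec hPc hne y).1
    ((h.mono (subset_insert _ _)).trans (entryPoint_spec hPc hne y).2)

theorem entryPoint_eq_of_subsingleton (hP : NoChord P) (hPc : IsClosed P) (hne : P.Nonempty)
    (hS : ∀ x ∈ S, ∀ y ∈ S, JoinedIn S x y) (hSP : (S ∩ P).Subsingleton) (hx : x ∈ S)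
    (hy : y ∈ S) : entryPoint P x = entryPoint P y := by
  rcases (S ∩ P).eq_empty_or_nonempty with h | ⟨p, hpS, hpP⟩
  · exact hP.entryPoint_eq_of_joinedIn hPc hne
      ((hS x hx y hy).mono (disjoint_iff_inter_eq_empty.2 h).subset_compl_right)
  · have hsub : S ⊆ insert p Pᶜ := fun z hz =>
      or_iff_not_imp_right.2 fun hzP => hSP ⟨hz, not_not.1 hzP⟩ ⟨hpS, hpP⟩
    rw [hP.entryPoint_eq hpP ((hS x hx p hpS).mono hsub),
      hP.entryPoint_eq hpP ((hS y hy p hpS).mono hsub)]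

theorem continuous_entryPoint [LocallyPathConnectedSpace X] (hP : NoChord P) (hPc : IsClosed P)
    (hne : P.Nonempty) : Continuous (entryPoint P) := by
  refine continuous_iff_continuousAt.2 fun x => ?_
  by_cases hx : x ∈ P
  · rw [ContinuousAt, hP.entryPoint_of_mem hx]
    refine ((isOpen_isPathConnected_basis x).tendsto_iff (isOpen_isPathConnected_basis x)).2 ?_
    rintro W ⟨hWo, hxW, hWp⟩
    exact ⟨W, ⟨hWo, hxW, hWp⟩, fun y hy =>
      hP.entryPoint_mem_of_joinedIn hPc (hWp.joinedIn y hy x hxW) hx⟩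
  · have hmem : pathComponentIn Pᶜ x ∈ 𝓝 x :=
      pathComponentIn_mem_nhds (hPc.isOpen_compl.mem_nhds hx)
    refine continuousAt_const.congr (f := fun _ => entryPoint P x) ?_
    filter_upwards [hmem] with y hy
    exact hP.entryPoint_eq_of_joinedIn hPc hne hy

theorem entryPoint_entryPoint (hP : NoChord P) (hPc : IsClosed P) (hne : P.Nonempty)
    (hQc : IsClosed Q) (hPQ : P ⊆ Q) (x : X) :
    entryPoint P (entryPoint Q x) = entryPoint P x := by
  obtain ⟨hq, hxq⟩ := entryPoint_spec hQc (hne.mono hPQ) x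
  set q := entryPoint Q x
  have hcompl : Qᶜ ⊆ Pᶜ := compl_subset_compl.2 hPQ
  by_cases hqP : q ∈ P
  · rw [hP.entryPoint_of_mem hqP]
    exact (hP.entryPoint_eq hqP (hxq.mono (insert_subset_insert hcompl))).symm
  · exact (hP.entryPoint_eq_of_joinedIn hPc hne
      (hxq.mono (insert_subset hqP hcompl))).symm

end NoChord

end ChordlessRetraction

/-! ### Neighborhood extensors -/

section NhdExtensor

variable {X : Type} [TopologicalSpace X] {P P₀ P₁ P₂ : Set X}

/-- The restriction of `f` to `A` extends to a continuous map into `P` from a neighborhood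
of `A`. -/
def HasNhdExtension {Z : Type} [TopologicalSpace Z] (f : Z → X) (A : Set Z) (P : Set X) : Prop :=
  ∃ (U : Set Z) (g : Z → X), IsOpen U ∧ A ⊆ U ∧ ContinuousOn g U ∧ MapsTo g U P ∧ EqOn g f A

/-- A set into which continuous maps extend from closed subsets of metric spaces to
neighborhoods. -/
def IsNhdExtensor (P : Set X) : Prop :=
  ∀ (Z : Type) [MetricSpace Z] (A : Set Z) (f : Z → X), IsClosed A → ContinuousOn f A →
    MapsTo f A P → HasNhdExtension f A P

theorem isNhdExtensor_empty : IsNhdExtensor (∅ : Set X) := fun _ _ _ f _ _ hfm =>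
  ⟨∅, f, isOpen_empty, fun _ ha => hfm ha, continuousOn_empty f, mapsTo_empty f _, fun _ _ => rfl⟩

theorem isNhdExtensor_singleton (p : X) : IsNhdExtensor {p} := fun _ _ _ _ _ _ hfm =>
  ⟨univ, fun _ => p, isOpen_univ, subset_univ _, continuousOn_const, fun _ _ => rfl,
    fun _ ha => (hfm ha).symm⟩

theorem isNhdExtensor_univ_of_tietzeExtension [TietzeExtension.{0, 0} X] :
    IsNhdExtensor (univ : Set X) := by
  intro Z _ A f hA hf _
  obtain ⟨g, hg⟩ := ContinuousMap.exists_restrict_eq hA ⟨A.domRestrict f, hf.domRestrict⟩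
  exact ⟨univ, g, isOpen_univ, subset_univ _, g.continuous.continuousOn, mapsTo_univ _ _,
    fun a ha => DFunLike.congr_fun hg ⟨a, ha⟩⟩

theorem IsNhdExtensor.of_retract {Y : Type} [TopologicalSpace Y] {Q : Set Y}
    (hQ : IsNhdExtensor Q) {φ : Y → X} {ψ : X → Y} (hφ : ContinuousOn φ Q) (hφm : MapsTo φ Q P)
    (hψ : ContinuousOn ψ P) (hψm : MapsTo ψ P Q) (hφψ : ∀ x ∈ P, φ (ψ x) = x) :
    IsNhdExtensor P := by
  intro Z _ A f hA hf hfm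
  obtain ⟨U, g, hU, hAU, hg, hgm, hgf⟩ := hQ Z A (ψ ∘ f) hA (hψ.comp hf hfm) (hψm.comp hfm)
  refine ⟨U, φ ∘ g, hU, hAU, hφ.comp hg hgm, hφm.comp hgm, fun a ha => ?_⟩
  rw [Function.comp_apply, hgf ha, Function.comp_apply, hφψ _ (hfm ha)]

theorem isNhdExtensor_univ_subtype_iff : IsNhdExtensor (univ : Set P) ↔ IsNhdExtensor P := by
  classical
  constructor
  · intro h
    rcases P.eq_empty_or_nonempty with rfl | ⟨p, hp⟩
    · exact isNhdExtensor_empty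
    refine h.of_retract (φ := Subtype.val)
      (ψ := fun x => if hx : x ∈ P then ⟨x, hx⟩ else ⟨p, hp⟩)
      continuous_subtype_val.continuousOn (fun x _ => x.2) ?_ (mapsTo_univ _ _)
      fun x hx => by simp only [dif_pos hx]
    rw [continuousOn_iff_continuous_domRestrict]
    exact continuous_id.congr fun x => by simp
  · intro h Z _ A f hA hf _
    obtain ⟨U, g, hU, hAU, hg, hgm, hgf⟩ := h Z A (fun z => (f z : X)) hA
      (continuous_subtype_val.comp_continuousOn hf) fun z _ => (f z).2
    refine ⟨U, fun z => if hz : z ∈ U then ⟨g z, hgm hz⟩ else f z, hU, hAU, ?_, mapsTo_univ _ _,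
      fun a ha => Subtype.ext (by simp only [dif_pos (hAU ha), hgf ha])⟩
    rw [continuousOn_iff_continuous_domRestrict] at hg ⊢
    exact (hg.subtype_mk fun z => hgm z.2).congr fun z => by simp

theorem IsNhdExtensor.inter_isOpen (hP : IsNhdExtensor P) {V : Set X} (hV : IsOpen V) :
    IsNhdExtensor (P ∩ V) := by
  intro Z _ A f hA hf hfm
  obtain ⟨U, g, hU, hAU, hg, hgm, hgf⟩ := hP Z A f hA hf (hfm.mono_right inter_subset_left)
  refine ⟨U ∩ g ⁻¹' V, g, hg.isOpen_inter_preimage hU hV, fun a ha => ⟨hAU ha, ?_⟩,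
    hg.mono inter_subset_left, fun z hz => ⟨hgm hz.1, hz.2⟩, hgf⟩
  rw [mem_preimage, hgf ha]
  exact (hfm ha).2

theorem IsNhdExtensor.exists_extension_union {Z : Type} [MetricSpace Z] (hP : IsNhdExtensor P)
    {A B : Set Z} {f g : Z → X} (hA : IsClosed A) (hB : IsClosed B) (hf : ContinuousOn f A)
    (hg : ContinuousOn g B) (hfm : MapsTo f A P) (hgm : MapsTo g B P)
    (hfg : EqOn f g (A ∩ B)) :
    ∃ (U : Set Z) (h : Z → X), IsOpen U ∧ A ∪ B ⊆ U ∧ ContinuousOn h U ∧ MapsTo h U P ∧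
      EqOn h f A ∧ EqOn h g B := by
  classical
  have eqOn_left : EqOn (A.piecewise f g) f A := piecewise_eqOn A f g
  have eqOn_right : EqOn (A.piecewise f g) g B := fun z hz => by
    by_cases hzA : z ∈ A
    · rw [piecewise_eq_of_mem _ _ _ hzA]
      exact hfg ⟨hzA, hz⟩
    · rw [piecewise_eq_of_notMem _ _ _ hzA]
  obtain ⟨U, h, hU, hAU, hh, hhm, heq⟩ := hP Z (A ∪ B) (A.piecewise f g) (hA.union hB)
    ((hf.congr eqOn_left).union_of_isClosed (hg.congr eqOn_right) hA hB)
    (fun z hz => hz.elim (fun h => eqOn_left h ▸ hfm h) (fun h => eqOn_right h ▸ hgm h))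
  exact ⟨U, h, hU, hAU, hh, hhm, (heq.mono subset_union_left).trans eqOn_left,
    (heq.mono subset_union_right).trans eqOn_right⟩

theorem HasNhdExtension.glue {Z : Type} [TopologicalSpace Z] {A C₁ C₂ U₁ U₂ : Set Z}
    (hC₁ : IsClosed C₁) (hC₂ : IsClosed C₂) (hC : C₁ ∪ C₂ = univ) (hU₁ : IsOpen U₁)
    (hU₂ : IsOpen U₂) (hA₁ : A ∩ C₁ ⊆ U₁) (hA₂ : A ∩ C₂ ⊆ U₂) {f g₁ g₂ : Z → X}
    (hg₁ : ContinuousOn g₁ U₁) (hg₂ : ContinuousOn g₂ U₂) (hm₁ : MapsTo g₁ U₁ P₁)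
    (hm₂ : MapsTo g₂ U₂ P₂) (hf₁ : EqOn g₁ f (A ∩ C₁)) (hf₂ : EqOn g₂ f (A ∩ C₂))
    (heq : ∀ z ∈ C₁ ∩ C₂, z ∈ U₁ → z ∈ U₂ → g₁ z = g₂ z) :
    HasNhdExtension f A (P₁ ∪ P₂) := by
  classical
  have mem_of_notMem : ∀ {z}, z ∉ C₁ → z ∈ C₂ := fun {z} hz =>
    (hC.symm ▸ mem_univ z : z ∈ C₁ ∪ C₂).resolve_left hz
  have closure_compl : closure C₁ᶜ ⊆ C₂ := closure_minimal (fun _ => mem_of_notMem) hC₂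
  set U : Set Z := (C₁ᶜ ∪ U₁) ∩ (C₂ᶜ ∪ U₂)
  have h₁ : U ∩ C₁ ⊆ U₁ := fun z hz => hz.1.1.resolve_left (not_not_intro hz.2)
  have h₂ : U ∩ C₂ ⊆ U₂ := fun z hz => hz.1.2.resolve_left (not_not_intro hz.2)
  refine ⟨U, C₁.piecewise g₁ g₂, (hC₁.isOpen_compl.union hU₁).inter (hC₂.isOpen_compl.union hU₂),
    fun a ha => ⟨or_iff_not_imp_left.2 fun h => hA₁ ⟨ha, not_not.1 h⟩,
      or_iff_not_imp_left.2 fun h => hA₂ ⟨ha, not_not.1 h⟩⟩, ?_, fun z hz => ?_, fun a ha => ?_⟩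
  · refine ContinuousOn.piecewise ?_ ?_
      (hg₂.mono ((inter_subset_inter_right _ closure_compl).trans h₂))
    · rintro z ⟨hzU, hz⟩
      rw [frontier_eq_closure_inter_closure, hC₁.closure_eq] at hz
      exact heq z ⟨hz.1, closure_compl hz.2⟩ (h₁ ⟨hzU, hz.1⟩) (h₂ ⟨hzU, closure_compl hz.2⟩)
    · rw [hC₁.closure_eq]
      exact hg₁.mono h₁
  · by_cases hz₁ : z ∈ C₁
    · exact Or.inl (by simpa only [piecewise_eq_of_mem _ _ _ hz₁] using hm₁ (h₁ ⟨hz, hz₁⟩))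
    · exact Or.inr (by
        simpa only [piecewise_eq_of_notMem _ _ _ hz₁] using hm₂ (h₂ ⟨hz, mem_of_notMem hz₁⟩))
  · by_cases ha₁ : a ∈ C₁
    · exact (piecewise_eq_of_mem _ _ _ ha₁).trans (hf₁ ⟨ha, ha₁⟩)
    · exact (piecewise_eq_of_notMem _ _ _ ha₁).trans (hf₂ ⟨ha, mem_of_notMem ha₁⟩)

theorem hasNhdExtension_union_of_isClosed_cover {Z : Type} [MetricSpace Z] {A C₁ C₂ : Set Z}
    {f : Z → X} (hP₀ : IsNhdExtensor P₀) (hP₁ : IsNhdExtensor P₁) (hP₂ : IsNhdExtensor P₂)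
    (hP : P₀ ⊆ P₁ ∩ P₂) (hA : IsClosed A) (hC₁ : IsClosed C₁) (hC₂ : IsClosed C₂)
    (hC : C₁ ∪ C₂ = univ) (hf : ContinuousOn f A) (hf₀ : MapsTo f (A ∩ (C₁ ∩ C₂)) P₀)
    (hf₁ : MapsTo f (A ∩ C₁) P₁) (hf₂ : MapsTo f (A ∩ C₂) P₂) :
    HasNhdExtension f A (P₁ ∪ P₂) := by
  set C := C₁ ∩ C₂
  have hCc : IsClosed C := hC₁.inter hC₂
  obtain ⟨U₀, g₀, hU₀, hAU₀, hg₀, hgm₀, hgf₀⟩ :=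
    hP₀ Z (A ∩ C) f (hA.inter hCc) (hf.mono inter_subset_left) hf₀
  obtain ⟨W, hW, hAW, hWU⟩ := normal_exists_closure_subset (hA.inter hCc) hU₀ hAU₀
  have hK : IsClosed (C ∩ closure W) := hCc.inter isClosed_closure
  have hKU : C ∩ closure W ⊆ U₀ := inter_subset_right.trans hWU
  obtain ⟨U₁, g₁, hU₁, hAU₁, hg₁, hgm₁, hgf₁, hgK₁⟩ :=
    hP₁.exists_extension_union (f := f) (g := g₀) (hA.inter hC₁) hK (hf.mono inter_subset_left)
      (hg₀.mono hKU) hf₁ (fun z hz => (hP (hgm₀ (hKU hz))).1)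
      (fun z hz => (hgf₀ ⟨hz.1.1, hz.2.1⟩).symm)
  obtain ⟨U₂, g₂, hU₂, hAU₂, hg₂, hgm₂, hgf₂, hgK₂⟩ :=
    hP₂.exists_extension_union (f := f) (g := g₀) (hA.inter hC₂) hK (hf.mono inter_subset_left)
      (hg₀.mono hKU) hf₂ (fun z hz => (hP (hgm₀ (hKU hz))).2)
      (fun z hz => (hgf₀ ⟨hz.1.1, hz.2.1⟩).symm)
  have hR : IsClosed (C \ W) := hCc.sdiff hW
  refine HasNhdExtension.glue (U₁ := U₁ \ (C \ W)) (U₂ := U₂ \ (C \ W)) hC₁ hC₂ hC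
    (hU₁.sdiff hR) (hU₂.sdiff hR)
    (fun a ha => ⟨hAU₁ (Or.inl ha), fun h => h.2 (hAW ⟨ha.1, h.1⟩)⟩)
    (fun a ha => ⟨hAU₂ (Or.inl ha), fun h => h.2 (hAW ⟨ha.1, h.1⟩)⟩)
    (hg₁.mono sdiff_subset) (hg₂.mono sdiff_subset) (hgm₁.mono_left sdiff_subset)
    (hgm₂.mono_left sdiff_subset) hgf₁ hgf₂ fun z hz hz₁ _ => ?_
  have hzW : z ∈ closure W := subset_closure (by_contra fun h => hz₁.2 ⟨hz, h⟩)
  rw [hgK₁ ⟨hz, hzW⟩, hgK₂ ⟨hz, hzW⟩]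

theorem IsNhdExtensor.of_isOpen_cover {V₁ V₂ : Set X} (hV₁ : IsOpen V₁) (hV₂ : IsOpen V₂)
    (hP₁ : IsNhdExtensor (P ∩ V₁)) (hP₂ : IsNhdExtensor (P ∩ V₂)) (hP : P ⊆ V₁ ∪ V₂) :
    IsNhdExtensor P := by
  intro Z _ A f hA hf hfm
  have hdis : Disjoint (A ∩ f ⁻¹' V₂ᶜ) (A ∩ f ⁻¹' V₁ᶜ) := by
    rw [disjoint_left]
    rintro a ⟨ha, ha₂⟩ ⟨-, ha₁⟩
    exact (hP (hfm ha)).elim ha₁ ha₂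
  obtain ⟨O₁, O₂, hO₁, hO₂, hFO₁, hFO₂, hO⟩ := normal_separation
    (hf.preimage_isClosed_of_isClosed hA hV₂.isClosed_compl)
    (hf.preimage_isClosed_of_isClosed hA hV₁.isClosed_compl) hdis
  have mapsTo₁ : MapsTo f (A ∩ O₂ᶜ) V₁ := fun a ha =>
    by_contra fun h => ha.2 (hFO₂ ⟨ha.1, h⟩)
  have mapsTo₂ : MapsTo f (A ∩ O₁ᶜ) V₂ := fun a ha =>
    by_contra fun h => ha.2 (hFO₁ ⟨ha.1, h⟩)
  rw [← inter_eq_left.2 hP, inter_union_distrib_left]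
  refine hasNhdExtension_union_of_isClosed_cover (hP₁.inter_isOpen hV₂) hP₁ hP₂
    (fun x hx => ⟨hx.1, hx.1.1, hx.2⟩) hA hO₂.isClosed_compl hO₁.isClosed_compl ?_ hf
    (fun a ha => ⟨⟨hfm ha.1, mapsTo₁ ⟨ha.1, ha.2.1⟩⟩, mapsTo₂ ⟨ha.1, ha.2.2⟩⟩)
    (fun a ha => ⟨hfm ha.1, mapsTo₁ ha⟩) fun a ha => ⟨hfm ha.1, mapsTo₂ ha⟩
  rw [← compl_inter, inter_comm, hO.inter_eq, compl_empty]

theorem exists_isClosed_cover_inter_subset {Z : Type*} [PseudoMetricSpace Z] {A₁ A₂ : Set Z}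
    (hA₁ : IsClosed A₁) (hA₂ : IsClosed A₂) :
    ∃ C₁ C₂ : Set Z, IsClosed C₁ ∧ IsClosed C₂ ∧ C₁ ∪ C₂ = univ ∧ (A₁ ∪ A₂) ∩ C₁ ⊆ A₁ ∧
      (A₁ ∪ A₂) ∩ C₂ ⊆ A₂ := by
  refine ⟨{z | infEDist z A₁ ≤ infEDist z A₂}, {z | infEDist z A₂ ≤ infEDist z A₁},
    isClosed_le continuous_infEDist continuous_infEDist,
    isClosed_le continuous_infEDist continuous_infEDist,
    eq_univ_of_forall fun z => le_total (infEDist z A₁) (infEDist z A₂), ?_, ?_⟩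
  · rintro a ⟨ha | ha, hle⟩
    · exact ha
    · exact (mem_iff_infEDist_zero_of_closed hA₁).2
        (nonpos_iff_eq_zero.1 (hle.trans_eq (infEDist_zero_of_mem ha)))
  · rintro a ⟨ha | ha, hle⟩
    · exact (mem_iff_infEDist_zero_of_closed hA₂).2
        (nonpos_iff_eq_zero.1 (hle.trans_eq (infEDist_zero_of_mem ha)))
    · exact ha

theorem IsNhdExtensor.union_of_isClosed (hP₁ : IsNhdExtensor P₁) (hP₂ : IsNhdExtensor P₂)
    (hP : IsNhdExtensor (P₁ ∩ P₂)) (hc₁ : IsClosed P₁) (hc₂ : IsClosed P₂) :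
    IsNhdExtensor (P₁ ∪ P₂) := by
  intro Z _ A f hA hf hfm
  obtain ⟨C₁, C₂, hC₁, hC₂, hC, hAC₁, hAC₂⟩ := exists_isClosed_cover_inter_subset
    (hf.preimage_isClosed_of_isClosed hA hc₁) (hf.preimage_isClosed_of_isClosed hA hc₂)
  have hA_eq : A ∩ f ⁻¹' P₁ ∪ A ∩ f ⁻¹' P₂ = A := by
    rw [← inter_union_distrib_left, ← preimage_union]
    exact inter_eq_left.2 hfm
  rw [hA_eq] at hAC₁ hAC₂
  exact hasNhdExtension_union_of_isClosed_cover hP hP₁ hP₂ subset_rfl hA hC₁ hC₂ hC hf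
    (fun a ha => ⟨(hAC₁ ⟨ha.1, ha.2.1⟩).2, (hAC₂ ⟨ha.1, ha.2.2⟩).2⟩)
    (fun a ha => (hAC₁ ha).2) fun a ha => (hAC₂ ha).2

theorem isNhdExtensor_univ_of_chartedSpace (H : Type) [TopologicalSpace H]
    [TietzeExtension.{0, 0} H] [CompactSpace X] [ChartedSpace H X] :
    IsNhdExtensor (univ : Set X) := by
  suffices h : ∃ V : Set X, IsOpen V ∧ univ ⊆ V ∧ IsNhdExtensor V by
    obtain ⟨V, -, hV, hVe⟩ := h
    rwa [univ_subset_iff.1 hV] at hVe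
  refine isCompact_univ.induction_on
    (p := fun s => ∃ V : Set X, IsOpen V ∧ s ⊆ V ∧ IsNhdExtensor V)
    ⟨∅, isOpen_empty, subset_rfl, isNhdExtensor_empty⟩
    (fun s t hst ⟨V, hV, htV, hVe⟩ => ⟨V, hV, hst.trans htV, hVe⟩) ?_ fun x _ => ?_
  · rintro s t ⟨V₁, hV₁, hs, hVe₁⟩ ⟨V₂, hV₂, ht, hVe₂⟩
    refine ⟨V₁ ∪ V₂, hV₁.union hV₂, union_subset_union hs ht,
      IsNhdExtensor.of_isOpen_cover hV₁ hV₂ ?_ ?_ subset_rfl⟩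
    · rwa [union_inter_cancel_left]
    · rwa [union_inter_cancel_right]
  · let e := chartAt H x
    have htarget : IsNhdExtensor e.target := by
      rw [← univ_inter e.target]
      exact isNhdExtensor_univ_of_tietzeExtension.inter_isOpen e.open_target
    exact ⟨e.source, mem_nhdsWithin_of_mem_nhds (e.open_source.mem_nhds (mem_chart_source _ x)),
      e.source, e.open_source, subset_rfl, htarget.of_retract e.continuousOn_symm
        e.mapsTo_symm e.continuousOn e.mapsTo fun _ => e.left_inv⟩

end NhdExtensor

theorem IsArc.exists_retraction_param {X : Type} [MetricSpace X] {A : Set X} {a b : X}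
    (h : IsArc A a b) :
    ∃ (f : ℝ → X) (g : X → ℝ), Continuous f ∧ (∀ t, f t ∈ A) ∧ f 0 = a ∧ f 1 = b ∧
      ContinuousOn g A ∧ g a = 0 ∧ ∀ x ∈ A, f (g x) = x := by
  obtain ⟨f, hf, hfi, rfl, rfl, rfl⟩ := h
  obtain ⟨g, hg, hgf⟩ := exists_continuousOn_factor isCompact_Icc hf
    (continuousOn_id (s := Icc (0 : ℝ) 1)) fun s hs t ht hst => hfi hs ht hst
  refine ⟨fun t => f (projIcc 0 1 zero_le_one t), g,
    hf.domRestrict.comp (continuous_projIcc (h := zero_le_one)),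
    fun t => mem_image_of_mem _ (projIcc 0 1 zero_le_one t).2, by simp, by simp, hg,
    hgf 0 (by simp), ?_⟩
  rintro _ ⟨t, ht, rfl⟩
  simp only [hgf t ht, id_eq, projIcc_of_mem _ ht]

theorem IsArc.isNhdExtensor {X : Type} [MetricSpace X] {A : Set X} {a b : X} (h : IsArc A a b) :
    IsNhdExtensor A := by
  obtain ⟨f, g, hf, hfA, -, -, hg, -, hfg⟩ := h.exists_retraction_param
  exact (isNhdExtensor_univ_of_tietzeExtension (X := ℝ)).of_retract hf.continuousOn
    (fun t _ => hfA t) hg (mapsTo_univ _ _) hfg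

theorem IsNhdExtensor.isANR {X : Type} [MetricSpace X] (h : IsNhdExtensor (univ : Set X)) :
    IsANR X := by
  intro Y _ e he
  let E : X ≃ₜ range e := he.isEmbedding.toHomeomorph
  have hrange : IsNhdExtensor (range e) := isNhdExtensor_univ_subtype_iff.1 <|
    h.of_retract E.continuous.continuousOn (mapsTo_univ _ _) E.symm.continuous.continuousOn
      (mapsTo_univ _ _) fun y _ => E.apply_symm_apply y
  obtain ⟨U, g, hU, heU, hg, hgm, hge⟩ :=
    hrange Y (range e) id he.isClosed_range continuousOn_id (mapsTo_id _)
  exact ⟨U, hU, heU, ⟨U.domRestrict g, hg.domRestrict⟩, fun u => hgm u.2,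
    fun x _ => hge (mem_range_self x)⟩

theorem IsANR.isNhdExtensor_univ {X : Type} [MetricSpace X] [CompactSpace X] (h : IsANR X) :
    IsNhdExtensor (univ : Set X) := by
  obtain ⟨e, he⟩ := Metric.PiNatEmbed.exists_embedding_to_hilbert_cube (X := X)
  let E : X ≃ₜ range e := he.toHomeomorph
  obtain ⟨U, hU, heU, r, hr, hre⟩ := h (ℕ → unitInterval)
    (TopologicalSpace.metrizableSpaceMetric _) e (he.continuous.isClosedEmbedding he.injective)
  have hUe : IsNhdExtensor U := by
    rw [← univ_inter U]
    exact isNhdExtensor_univ_of_tietzeExtension.inter_isOpen hU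
  have hretract : ∀ x : X, r ⟨e x, heU (mem_range_self x)⟩ = e x := fun x => hre x _
  refine (isNhdExtensor_univ_subtype_iff.2 hUe).of_retract
    (φ := fun u => E.symm ⟨r u, hr u⟩) (ψ := fun x => ⟨e x, heU (mem_range_self x)⟩)
    (E.symm.continuous.comp (r.continuous.subtype_mk hr)).continuousOn (mapsTo_univ _ _)
    (he.continuous.subtype_mk _).continuousOn (mapsTo_univ _ _) fun x _ => ?_
  simp only [hretract]
  exact E.symm_apply_apply x

/-! ### Small cyclic elements -/

section SmallCyclicElements

open Filter Topology

variable {X : Type} [MetricSpace X] [CompactSpace X]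

theorem finite_maximalCyclic_of_le_dist [PathConnectedSpace X] [LocallyPathConnectedSpace X]
    (hcl : ∀ T : Set X, MaximalCyclic T → IsClosed T) {ε : ℝ} (hε : 0 < ε) :
    {T : Set X | MaximalCyclic T ∧ ∃ x ∈ T, ∃ y ∈ T, ε ≤ dist x y}.Finite := by
  by_contra hinf
  let T := Set.Infinite.natEmbedding _ hinf
  choose hTm x hx y hy hxy using fun n => (T n).2
  obtain ⟨⟨a, b⟩, φ, hφ, hlim⟩ := CompactSpace.tendsto_subseq fun n => (x n, y n)
  have hxa : Tendsto (fun n => x (φ n)) atTop (𝓝 a) := (continuous_fst.tendsto _).comp hlim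
  have hyb : Tendsto (fun n => y (φ n)) atTop (𝓝 b) := (continuous_snd.tendsto _).comp hlim
  have hab : ε ≤ dist a b := ge_of_tendsto' (hxa.dist hyb) fun n => hxy (φ n)
  obtain ⟨W, ⟨hWo, haW, hWp⟩, hW⟩ :=
    (isOpen_isPathConnected_basis a).mem_iff.1 (ball_mem_nhds a (half_pos hε))
  obtain ⟨V, ⟨hVo, hbV, hVp⟩, hV⟩ :=
    (isOpen_isPathConnected_basis b).mem_iff.1 (ball_mem_nhds b (half_pos hε))
  obtain ⟨N, hN⟩ := eventually_atTop.1
    ((hxa.eventually (hWo.mem_nhds haW)).and (hyb.eventually (hVo.mem_nhds hbV)))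
  obtain ⟨hxiW, hyiV⟩ := hN N le_rfl
  obtain ⟨hxjW, hyjV⟩ := hN (N + 1) (Nat.le_succ N)
  set i := φ N
  set j := φ (N + 1)
  have hTi := hcl _ (hTm i)
  have hij : (T i : Set X) ≠ T j := fun h =>
    (hφ (Nat.lt_succ_self N)).ne (T.injective (Subtype.ext h))
  have hchord := (hTm i).noChord
  -- `T j` meets `T i` in at most one point, so all of `T j` enters `T i` at the same point.
  have hentry : entryPoint (T i) (x j) = entryPoint (T i) (y j) :=
    hchord.entryPoint_eq_of_subsingleton hTi ⟨_, hx i⟩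
      (fun u hu v hv => (hTm j).2.1.joinedIn hu hv)
      ((hTm i).inter_subsingleton hTi (hTm j) hij) (hx j) (hy j)
  have hentryW := hchord.entryPoint_mem_of_joinedIn hTi (hWp.joinedIn _ hxjW _ hxiW) (hx i)
  have hentryV := hchord.entryPoint_mem_of_joinedIn hTi (hVp.joinedIn _ hyjV _ hyiV) (hy i)
  rw [hentry] at hentryW
  linarith [mem_ball'.1 (hW hentryW), mem_ball.1 (hV hentryV),
    dist_triangle a (entryPoint (T i) (y j)) b]

theorem IsNhdExtensor.exists_homotopy_of_dist_lt (hX : IsNhdExtensor (univ : Set X)) :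
    ∃ δ > 0, ∃ H : X × X × unitInterval → X, ContinuousOn H {q | dist q.1 q.2.1 < δ} ∧
      ∀ x y, H (x, y, 0) = x ∧ H (x, y, 1) = y := by
  let D : Set (X × X × unitInterval) := {q | q.1 = q.2.1}
  have hD : IsClosed D := isClosed_eq (by fun_prop) (by fun_prop)
  have hstart : IsClosed {q : X × X × unitInterval | q.2.2 = 0} :=
    isClosed_eq (by fun_prop) (by fun_prop)
  have hend : IsClosed {q : X × X × unitInterval | q.2.2 = 1} :=
    isClosed_eq (by fun_prop) (by fun_prop)
  obtain ⟨U, H, hU, hsub, hH, -, hH₀, hH₁⟩ := hX.exists_extension_union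
    (f := fun q : X × X × unitInterval => q.1) (g := fun q => q.2.1) (hstart.union hD)
    (hend.union hD) (by fun_prop) (by fun_prop) (mapsTo_univ _ _) (mapsTo_univ _ _) <| by
      rintro q ⟨h₀ | h, h₁ | h'⟩
      · exact absurd (h₀.symm.trans h₁) zero_ne_one
      · exact h'
      · exact h
      · exact h
  obtain ⟨δ, hδ, hδU⟩ := hD.isCompact.exists_thickening_subset_open hU
    fun q hq => hsub (Or.inl (Or.inr hq))
  refine ⟨δ, hδ, H, hH.mono fun q hq => hδU (mem_thickening_iff.2 ⟨(q.2.1, q.2.1, q.2.2), rfl, ?_⟩),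
    fun x y => ⟨hH₀ (Or.inl rfl), hH₁ (Or.inl rfl)⟩⟩
  simpa [Prod.dist_eq, hδ] using hq

theorem IsNhdExtensor.exists_contractibleSpace_of_dist_lt (hX : IsNhdExtensor (univ : Set X)) :
    ∃ δ > 0, ∀ T : Set X, T.Nonempty → (∀ x ∈ T, ∀ y ∈ T, dist x y < δ) →
      (∃ ρ : X → X, Continuous ρ ∧ (∀ x, ρ x ∈ T) ∧ ∀ x ∈ T, ρ x = x) → ContractibleSpace T := by
  obtain ⟨δ, hδ, H, hH, hends⟩ := hX.exists_homotopy_of_dist_lt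
  refine ⟨δ, hδ, ?_⟩
  rintro T ⟨t₀, ht₀⟩ hTδ ⟨ρ, hρ, hρT, hρid⟩
  rw [contractible_iff_id_nullhomotopic]
  have hcont : Continuous fun q : unitInterval × T => H (q.2, t₀, q.1) :=
    hH.comp_continuous (by fun_prop) fun q => hTδ _ q.2.2 _ ht₀
  refine ⟨⟨t₀, ht₀⟩, ⟨⟨⟨fun q => ⟨ρ (H (q.2, t₀, q.1)), hρT _⟩, (hρ.comp hcont).subtype_mk _⟩,
    fun x => Subtype.ext ?_, fun x => Subtype.ext ?_⟩⟩⟩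
  · simp [(hends _ _).1, hρid _ x.2]
  · simp [(hends _ _).2, hρid _ ht₀]

theorem MaximalCyclic.nonempty {X : Type} [TopologicalSpace X] {T : Set X}
    (hT : MaximalCyclic T) : T.Nonempty :=
  (not_subsingleton_iff.1 hT.1).nonempty

theorem IsNhdExtensor.finite_maximalCyclic_not_contractibleSpace [PathConnectedSpace X]
    [LocallyPathConnectedSpace X] (hX : IsNhdExtensor (univ : Set X))
    (hcl : ∀ T : Set X, MaximalCyclic T → IsClosed T) :
    {T : Set X | MaximalCyclic T ∧ ¬ ContractibleSpace T}.Finite := by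
  obtain ⟨δ, hδ, h⟩ := hX.exists_contractibleSpace_of_dist_lt
  refine (finite_maximalCyclic_of_le_dist hcl hδ).subset fun T ⟨hT, hTc⟩ => ⟨hT, ?_⟩
  by_contra! hsmall
  exact hTc (h T hT.nonempty hsmall ⟨entryPoint T,
    hT.noChord.continuous_entryPoint (hcl T hT) hT.nonempty,
    fun x => (entryPoint_spec (hcl T hT) hT.nonempty x).1, fun x => hT.noChord.entryPoint_of_mem⟩)

end SmallCyclicElements

/-! ### Spheres are not contractible -/

section Sphere

open Filter Topology MeasureTheory

variable {E : Type*} [NormedAddCommGroup E]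

theorem exists_mem_segment_mem_frontier [NormedSpace ℝ E] {s : Set E} {x y : E} (hx : x ∈ s)
    (hy : y ∉ s) : ∃ z ∈ segment ℝ x y, z ∈ frontier s := by
  have := isPreconnected_iff_preconnectedSpace.1 (convex_segment (𝕜 := ℝ) x y).isPreconnected
  obtain ⟨z, hz⟩ := nonempty_frontier_iff (s := ((↑) : segment ℝ x y → E) ⁻¹' s) |>.2
    ⟨⟨⟨x, left_mem_segment ℝ x y⟩, hx⟩,
      fun h => hy (h.ge (mem_univ ⟨y, right_mem_segment ℝ x y⟩))⟩
  exact ⟨z, z.2, continuous_subtype_val.frontier_preimage_subset s hz⟩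

theorem lipschitzWith_indicator_of_eq_zero_on_frontier [NormedSpace ℝ E] {F : Type*}
    [PseudoMetricSpace F] [Zero F] {s : Set E} (hs : IsClosed s) {g : E → F} {L : NNReal}
    (hg : LipschitzOnWith L g s) (hg₀ : ∀ x ∈ frontier s, g x = 0) :
    LipschitzWith L (s.indicator g) := by
  have dist_le : ∀ x ∈ s, ∀ y ∉ s, dist (g x) 0 ≤ L * dist x y := by
    intro x hx y hy
    obtain ⟨z, hz, hzs⟩ := exists_mem_segment_mem_frontier hx hy
    rw [← hg₀ z hzs, ← dist_add_dist_of_mem_segment hz]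
    exact (hg.dist_le_mul x hx z (hs.frontier_subset hzs)).trans
      (mul_le_mul_of_nonneg_left (le_add_of_nonneg_right dist_nonneg) L.2)
  refine LipschitzWith.of_dist_le_mul fun x y => ?_
  by_cases hx : x ∈ s <;> by_cases hy : y ∈ s
  · rw [indicator_of_mem hx, indicator_of_mem hy]
    exact hg.dist_le_mul x hx y hy
  · rw [indicator_of_mem hx, indicator_of_notMem hy]
    exact dist_le x hx y hy
  · rw [indicator_of_notMem hx, indicator_of_mem hy, dist_comm, dist_comm x]
    exact dist_le y hy x hx
  · rw [indicator_of_notMem hx, indicator_of_notMem hy, dist_self]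
    positivity

theorem bijective_id_add_of_lipschitzWith [NormedSpace ℝ E] [CompleteSpace E] {G : E → E}
    {L : NNReal} (hG : LipschitzWith L G) (hL : L < 1) :
    Function.Bijective fun x => x + G x := by
  have happrox : ApproximatesLinearOn (fun x => x + G x)
      (ContinuousLinearEquiv.refl ℝ E : E →L[ℝ] E) univ L := fun x _ y _ => by
    simpa [dist_eq_norm, add_sub_add_comm] using hG.dist_le_mul x y
  rcases subsingleton_or_nontrivial E with hE | hE
  · exact ⟨Function.injective_of_subsingleton _, Function.surjective_to_subsingleton _⟩
  have hlt : L < ‖((ContinuousLinearEquiv.refl ℝ E).symm : E →L[ℝ] E)‖₊⁻¹ := by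
    simpa using hL
  exact ⟨injOn_univ.1 (happrox.injOn (Or.inr hlt)), happrox.surjective (Or.inr hlt)⟩

theorem bijOn_id_add_smul_of_lipschitzOnWith [NormedSpace ℝ E] [CompleteSpace E] {s : Set E}
    (hs : IsClosed s) {g : E → E} {L : NNReal} (hg : LipschitzOnWith L g s)
    (hg₀ : ∀ x ∈ frontier s, g x = 0) {t : ℝ} (ht : ‖t‖₊ * L < 1) :
    BijOn (fun x => x + t • g x) s s := by
  have hbij : Function.Bijective fun x => x + t • s.indicator g x :=
    bijective_id_add_of_lipschitzWith
      ((lipschitzWith_smul t).comp (lipschitzWith_indicator_of_eq_zero_on_frontier hs hg hg₀)) ht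
  have hcompl : EqOn (fun x => x + t • s.indicator g x) id sᶜ := fun x hx => by
    simp [indicator_of_notMem hx]
  have hbijOn := ((bijOn_id sᶜ).congr hcompl.symm).compl hbij
  rw [compl_compl] at hbijOn
  exact hbijOn.congr fun x hx => by simp only [indicator_of_mem hx]

section Determinant

variable [NormedSpace ℝ E] [FiniteDimensional ℝ E]

theorem exists_polynomial_eval_eq_det_id_add_smul (A : E →L[ℝ] E) :
    ∃ p : Polynomial ℝ, p.natDegree ≤ Module.finrank ℝ E ∧
      ∀ t : ℝ, p.eval t = (ContinuousLinearMap.id ℝ E + t • A).det := by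
  let b := Module.finBasis ℝ E
  let M := LinearMap.toMatrix b b (A : E →ₗ[ℝ] E)
  refine ⟨((Polynomial.X : Polynomial ℝ) • M.map Polynomial.C +
    (1 : Matrix _ _ ℝ).map Polynomial.C).det, ?_, fun t => ?_⟩
  · simpa using Polynomial.natDegree_det_X_add_C_le M 1
  · rw [ContinuousLinearMap.det, ← LinearMap.det_toMatrix b, ← Polynomial.coe_evalRingHom,
      RingHom.map_det]
    congr 1
    ext i j
    simp only [RingHom.mapMatrix_apply, Matrix.map_apply, Matrix.add_apply, Matrix.smul_apply,
      smul_eq_mul, Polynomial.coe_evalRingHom, Polynomial.eval_mul,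
      Polynomial.eval_X, Polynomial.eval_C, M, ContinuousLinearMap.toLinearMap_add,
      ContinuousLinearMap.toLinearMap_smul, ContinuousLinearMap.coe_id, map_add, map_smul,
      LinearMap.toMatrix_id]
    ring

theorem exists_det_id_add_smul_eq_sum (E : Type*) [NormedAddCommGroup E] [NormedSpace ℝ E]
    [FiniteDimensional ℝ E] :
    ∃ p : ℕ → Polynomial ℝ, ∀ (A : E →L[ℝ] E) (t : ℝ),
      (ContinuousLinearMap.id ℝ E + t • A).det =
        ∑ j ∈ Finset.range (Module.finrank ℝ E + 1),
          (ContinuousLinearMap.id ℝ E + (j : ℝ) • A).det * (p j).eval t := by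
  refine ⟨Lagrange.basis (Finset.range (Module.finrank ℝ E + 1)) fun j : ℕ => (j : ℝ),
    fun A t => ?_⟩
  obtain ⟨q, hq, hqA⟩ := exists_polynomial_eval_eq_det_id_add_smul A
  have hdeg : q.degree < (Finset.range (Module.finrank ℝ E + 1)).card := by
    rw [Finset.card_range, Nat.cast_succ]
    exact (Polynomial.degree_le_of_natDegree_le hq).trans_lt
      (by exact_mod_cast Nat.lt_succ_self _)
  simp only [← hqA]
  conv_lhs => rw [Lagrange.eq_interpolate Nat.cast_injective.injOn hdeg,
    Lagrange.interpolate_apply, Polynomial.eval_finsetSum]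
  simp only [Polynomial.eval_mul, Polynomial.eval_C]

variable [MeasurableSpace E] [BorelSpace E] (μ : Measure E) [IsFiniteMeasureOnCompacts μ]

theorem exists_polynomial_eval_eq_setIntegral_det {K : Set E} (hK : IsCompact K)
    {A : E → E →L[ℝ] E} (hA : Continuous A) :
    ∃ p : Polynomial ℝ, ∀ t : ℝ,
      p.eval t = ∫ x in K, (ContinuousLinearMap.id ℝ E + t • A x).det ∂μ := by
  obtain ⟨p, hp⟩ := exists_det_id_add_smul_eq_sum E
  have hint : ∀ j : ℕ, IntegrableOn
      (fun x => (ContinuousLinearMap.id ℝ E + (j : ℝ) • A x).det) K μ := fun j =>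
    (ContinuousLinearMap.continuous_det.comp (by fun_prop)).continuousOn.integrableOn_compact hK
  refine ⟨∑ j ∈ Finset.range (Module.finrank ℝ E + 1), Polynomial.C
    (∫ x in K, (ContinuousLinearMap.id ℝ E + (j : ℝ) • A x).det ∂μ) * p j, fun t => ?_⟩
  simp only [hp _ t]
  rw [integral_finsetSum _ fun j _ => (hint j).mul_const _, Polynomial.eval_finsetSum]
  simp only [Polynomial.eval_mul, Polynomial.eval_C, integral_mul_const]

end Determinant

section ChangeOfVariables

variable [NormedSpace ℝ E] [FiniteDimensional ℝ E] [MeasurableSpace E] [BorelSpace E]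
  (μ : Measure E) [μ.IsAddHaarMeasure] {K : Set E} {g : E → E}

theorem eventually_setIntegral_det_id_add_smul_fderiv (hK : IsCompact K) (hKc : Convex ℝ K)
    (hg : ContDiff ℝ 1 g) (hg₀ : ∀ x ∈ frontier K, g x = 0) :
    ∀ᶠ t : ℝ in 𝓝 0,
      ∫ x in K, (ContinuousLinearMap.id ℝ E + t • fderiv ℝ g x).det ∂μ = μ.real K := by
  have hg' : ∀ x, HasFDerivAt g (fderiv ℝ g x) x := fun x =>
    (hg.differentiable one_ne_zero x).hasFDerivAt
  have hcont : Continuous (fderiv ℝ g) := hg.continuous_fderiv one_ne_zero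
  obtain ⟨C, hC⟩ := hK.bddAbove_image hcont.nnnorm.continuousOn
  have hlip : LipschitzOnWith C g K := hKc.lipschitzOnWith_of_nnnorm_hasFDerivWithin_le
    (fun x _ => (hg' x).hasFDerivWithinAt) fun x hx => hC (mem_image_of_mem _ hx)
  have hdet : Continuous fun q : ℝ × E =>
      (ContinuousLinearMap.id ℝ E + q.1 • fderiv ℝ g q.2).det :=
    ContinuousLinearMap.continuous_det.comp (by fun_prop)
  have hpos : ∀ᶠ t : ℝ in 𝓝 0, ∀ x ∈ K,
      0 < (ContinuousLinearMap.id ℝ E + t • fderiv ℝ g x).det := by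
    refine hK.eventually_forall_of_forall_eventually fun x _ => ?_
    refine (hdet.tendsto (0, x)).eventually (lt_mem_nhds ?_)
    simp [ContinuousLinearMap.det]
  have hsmall : ∀ᶠ t : ℝ in 𝓝 0, ‖t‖₊ * C < 1 := by
    have : Continuous fun t : ℝ => ‖t‖₊ * C := by fun_prop
    exact (this.tendsto 0).eventually_lt_const (by simp)
  filter_upwards [hpos, hsmall] with t htpos htC
  have hbij : BijOn (fun x => x + t • g x) K K :=
    bijOn_id_add_smul_of_lipschitzOnWith hK.isClosed hlip hg₀ htC
  have hderiv : ∀ x ∈ K, HasFDerivWithinAt (fun x => x + t • g x)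
      (ContinuousLinearMap.id ℝ E + t • fderiv ℝ g x) K x := fun x _ =>
    ((hasFDerivAt_id x).add ((hg' x).const_smul t)).hasFDerivWithinAt
  calc ∫ x in K, (ContinuousLinearMap.id ℝ E + t • fderiv ℝ g x).det ∂μ
      = ∫ x in K, |(ContinuousLinearMap.id ℝ E + t • fderiv ℝ g x).det| • (1 : ℝ) ∂μ :=
        setIntegral_congr_fun hK.measurableSet fun x hx => by simp [abs_of_pos (htpos x hx)]
    _ = ∫ _ in (fun x => x + t • g x) '' K, (1 : ℝ) ∂μ :=
        (integral_image_eq_integral_abs_det_fderiv_smul μ hK.measurableSet hderiv hbij.injOn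
          fun _ => (1 : ℝ)).symm
    _ = μ.real K := by simp [hbij.image_eq]

theorem setIntegral_det_id_add_fderiv (hK : IsCompact K) (hKc : Convex ℝ K)
    (hg : ContDiff ℝ 1 g) (hg₀ : ∀ x ∈ frontier K, g x = 0) :
    ∫ x in K, (ContinuousLinearMap.id ℝ E + fderiv ℝ g x).det ∂μ = μ.real K := by
  obtain ⟨p, hp⟩ := exists_polynomial_eval_eq_setIntegral_det μ hK
    (hg.continuous_fderiv one_ne_zero)
  have hconst : p = Polynomial.C (μ.real K) := Polynomial.eq_of_infinite_eval_eq _ _ <|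
    infinite_of_mem_nhds 0 <| by
      filter_upwards [eventually_setIntegral_det_id_add_smul_fderiv μ hK hKc hg hg₀] with t ht
      rw [hp, ht, Polynomial.eval_C]
  simpa [hconst] using (hp 1).symm

end ChangeOfVariables

theorem exists_retraction_closedBall_of_contractibleSpace_sphere [NormedSpace ℝ E] [ProperSpace E]
    [ContractibleSpace (sphere (0 : E) 1)] :
    ∃ φ : E → E, ContinuousOn φ (closedBall 0 1) ∧ (∀ x ∈ closedBall (0 : E) 1, ‖φ x‖ = 1) ∧
      ∀ x ∈ sphere (0 : E) 1, φ x = x := by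
  obtain ⟨x₀, ⟨H⟩⟩ := (contractible_iff_id_nullhomotopic (sphere (0 : E) 1)).1 inferInstance
  let cone : unitInterval × sphere (0 : E) 1 → E := fun q => (unitInterval.symm q.1 : ℝ) • (q.2 : E)
  have hcone : Continuous cone := by fun_prop
  have norm_cone : ∀ q, ‖cone q‖ = 1 - q.1 := fun q => by
    rw [norm_smul, norm_eq_of_mem_sphere, mul_one, Real.norm_of_nonneg (unitInterval.symm q.1).2.1,
      unitInterval.coe_symm_eq]
  have hH : ∀ p q, cone p = cone q → (H p : E) = H q := by
    rintro ⟨s, x⟩ ⟨t, y⟩ hpq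
    obtain rfl : s = t := by
      have := congrArg norm hpq
      rw [norm_cone, norm_cone] at this
      exact Subtype.ext (by simpa using this)
    by_cases hs : unitInterval.symm s = 0
    · rw [unitInterval.symm_eq_zero] at hs
      rw [hs, H.apply_one, H.apply_one]
      rfl
    · obtain rfl : x = y := Subtype.ext
        (smul_right_injective E (fun h => hs (Subtype.ext h)) hpq)
      rfl
  have : Nonempty (unitInterval × sphere (0 : E) 1) := ⟨(0, x₀)⟩
  obtain ⟨φ, hφ, hφH⟩ := exists_continuousOn_factor isCompact_univ hcone.continuousOn
    (continuous_subtype_val.comp H.continuous).continuousOn fun p _ q _ => hH p q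
  have hball : closedBall (0 : E) 1 ⊆ cone '' univ := by
    intro x hx
    rw [mem_closedBall_zero_iff] at hx
    by_cases hx₀ : x = 0
    · exact ⟨(1, x₀), mem_univ _, by simp [cone, hx₀]⟩
    · refine ⟨(unitInterval.symm ⟨‖x‖, norm_nonneg x, hx⟩, ⟨‖x‖⁻¹ • x, ?_⟩), mem_univ _, ?_⟩
      · simp [norm_smul, hx₀]
      · simp [cone, smul_smul, hx₀]
  refine ⟨φ, hφ.mono hball, fun x hx => ?_, fun x hx => ?_⟩
  · obtain ⟨q, hq, rfl⟩ := hball hx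
    rw [hφH q hq]
    exact norm_eq_of_mem_sphere _
  · simpa [cone] using hφH (0, ⟨x, hx⟩) (mem_univ _)

variable [InnerProductSpace ℝ E] [FiniteDimensional ℝ E]

theorem det_eq_zero_of_hasFDerivAt_of_norm_eq_one {ρ : E → E} {ρ' : E →L[ℝ] E} {x : E}
    (hρ : HasFDerivAt ρ ρ' x) (hnorm : ∀ y, ‖ρ y‖ = 1) : ρ'.det = 0 := by
  by_contra hdet
  have hinner : ∀ v, inner ℝ (ρ x) (ρ' v) = 0 := by
    intro v
    have hconst : (fun y => inner ℝ (ρ y) (ρ y)) = fun _ => (1 : ℝ) := by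
      ext y
      rw [real_inner_self_eq_norm_sq, hnorm, one_pow]
    have hderiv := hρ.inner ℝ hρ
    rw [hconst] at hderiv
    have hsum : inner ℝ (ρ x) (ρ' v) + inner ℝ (ρ' v) (ρ x) = 0 := by
      simpa using DFunLike.congr_fun (hderiv.unique (hasFDerivAt_const 1 x)) v
    linarith [real_inner_comm (ρ x) (ρ' v)]
  obtain ⟨v, hv⟩ : ∃ v, ρ' v = ρ x :=
    (LinearMap.equivOfDetNeZero (ρ' : E →ₗ[ℝ] E) hdet).surjective (ρ x)
  have := hinner v
  rw [hv, real_inner_self_eq_norm_sq, hnorm] at this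
  norm_num at this

theorem exists_mem_sphere_ne_of_contDiff {ρ : E → E} (hρ : ContDiff ℝ 1 ρ)
    (hnorm : ∀ y, ‖ρ y‖ = 1) : ∃ x ∈ sphere (0 : E) 1, ρ x ≠ x := by
  by_contra! hid
  borelize E
  let μ : Measure E := Measure.addHaar
  have hderiv : ∀ x, HasFDerivAt ρ (ContinuousLinearMap.id ℝ E + fderiv ℝ (ρ - id) x) x := by
    intro x
    have hsub := ((hρ.sub contDiff_id).differentiable one_ne_zero x).hasFDerivAt
    have hadd : HasFDerivAt (id + (ρ - id)) _ x := (hasFDerivAt_id x).add hsub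
    rwa [add_sub_cancel] at hadd
  have hintegral := setIntegral_det_id_add_fderiv μ (isCompact_closedBall (0 : E) 1)
    (convex_closedBall 0 1) (g := ρ - id) (hρ.sub contDiff_id)
    fun x hx => sub_eq_zero.2 (hid x (frontier_closedBall_subset_sphere hx))
  simp only [fun x => det_eq_zero_of_hasFDerivAt_of_norm_eq_one (hderiv x) hnorm,
    integral_zero] at hintegral
  exact (ENNReal.toReal_pos (measure_closedBall_pos μ 0 one_pos).ne'
    measure_closedBall_lt_top.ne).ne hintegral

theorem exists_mem_sphere_ne_of_continuousOn {φ : E → E} (hφ : ContinuousOn φ (closedBall 0 1))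
    (hnorm : ∀ x ∈ closedBall (0 : E) 1, ‖φ x‖ = 1) : ∃ x ∈ sphere (0 : E) 1, φ x ≠ x := by
  classical
  by_contra! hid
  let F : E → E := fun x => if ‖x‖ ≤ 1 / 2 then (1 / 2 : ℝ) • φ ((2 : ℝ) • x) else x
  have hmaps : ∀ x : E, ‖x‖ ≤ 1 / 2 → (2 : ℝ) • x ∈ closedBall (0 : E) 1 := fun x hx => by
    rw [mem_closedBall_zero_iff, norm_smul, Real.norm_two]
    linarith
  have hF : Continuous F := by
    refine continuous_if_le (by fun_prop) (by fun_prop) ?_ (by fun_prop) fun x hx => ?_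
    · exact (hφ.comp (by fun_prop) hmaps).const_smul _
    · rw [hid _ (by simp [norm_smul, hx]), smul_smul]
      norm_num
  have norm_F : ∀ x, 1 / 2 ≤ ‖F x‖ := by
    intro x
    by_cases hx : ‖x‖ ≤ 1 / 2
    · simp only [F, if_pos hx, norm_smul, hnorm _ (hmaps x hx)]
      norm_num
    · simpa only [F, if_neg hx] using (not_le.1 hx).le
  have F_eq : ∀ x, 1 / 2 < ‖x‖ → F x = x := fun x hx => if_neg (not_le.2 hx)
  obtain ⟨h, hh, hhF, hhid, -⟩ := hF.exists_contDiff_approx_and_eqOn 1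
    (continuous_const (y := (1 / 2 : ℝ))) (fun _ => by norm_num)
    (isClosed_le continuous_const continuous_norm : IsClosed {x : E | 1 ≤ ‖x‖})
    ((isOpen_lt continuous_const continuous_norm : IsOpen {x : E | 1 / 2 < ‖x‖}).mem_nhdsSet.2
      fun x (hx : 1 ≤ ‖x‖) => one_half_lt_one.trans_le hx)
    (contDiffOn_id.congr F_eq)
  have hne : ∀ x, h x ≠ 0 := by
    intro x hx
    have := hhF x
    rw [hx, dist_zero_left] at this
    exact this.not_ge (norm_F x)
  obtain ⟨x, hx, hne⟩ := exists_mem_sphere_ne_of_contDiff (ρ := fun x => ‖h x‖⁻¹ • h x)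
    (((hh.norm ℝ hne).inv fun x => norm_ne_zero_iff.2 (hne x)).smul hh)
    fun x => by simp [norm_smul, hne x]
  rw [mem_sphere_zero_iff_norm] at hx
  refine hne ?_
  simp only [hhid hx.ge, F_eq x (by linarith), hx, inv_one, one_smul]

variable (E) in
theorem not_contractibleSpace_sphere : ¬ ContractibleSpace (sphere (0 : E) 1) := by
  intro hcontr
  obtain ⟨φ, hφ, hnorm, hid⟩ := exists_retraction_closedBall_of_contractibleSpace_sphere (E := E)
  obtain ⟨x, hx, hne⟩ := exists_mem_sphere_ne_of_continuousOn hφ hnorm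
  exact hne (hid x hx)

end Sphere

/-! ### Skeleta -/

section Skeleta

theorem CyclicallyConnected.not_subset_union_of_subsingleton {X : Type} [TopologicalSpace X]
    {P Q T : Set X} (hT : CyclicallyConnected T) (hne : ¬ T.Subsingleton)
    (hP : (T ∩ P).Subsingleton) (hQ : (T ∩ Q).Subsingleton) : ¬ T ⊆ P ∪ Q := by
  intro hTPQ
  obtain ⟨a, ha, b, hb, hab⟩ := not_subsingleton_iff.1 hne
  obtain ⟨A, hAT, hA⟩ := hT.exists_isArc ha hb hab
  obtain ⟨c, hc, hca, hcb⟩ := hA.exists_mem_ne_ne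
  have hcT := hAT hc
  rcases hTPQ ha with haP | haQ <;> rcases hTPQ hb with hbP | hbQ <;>
    rcases hTPQ hcT with hcP | hcQ
  · exact hab (hP ⟨ha, haP⟩ ⟨hb, hbP⟩)
  · exact hab (hP ⟨ha, haP⟩ ⟨hb, hbP⟩)
  · exact hca (hP ⟨hcT, hcP⟩ ⟨ha, haP⟩)
  · exact hcb (hQ ⟨hcT, hcQ⟩ ⟨hb, hbQ⟩)
  · exact hcb (hP ⟨hcT, hcP⟩ ⟨hb, hbP⟩)
  · exact hca (hQ ⟨hcT, hcQ⟩ ⟨ha, haQ⟩)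
  · exact hab (hQ ⟨ha, haQ⟩ ⟨hb, hbQ⟩)
  · exact hab (hQ ⟨ha, haQ⟩ ⟨hb, hbQ⟩)

variable {X : Type} [MetricSpace X] {A P Q R S T : Set X} {p q x : X}

theorem exists_isArc_inter_eq_singleton [PathConnectedSpace X] (hP : IsClosed P)
    (hPne : P.Nonempty) (hR : IsClosed R) (hRne : R.Nonempty) (hPR : Disjoint P R) :
    ∃ q p B, IsArc B q p ∧ B ∩ R = {q} ∧ B ∩ P = {p} := by
  obtain ⟨x, hx⟩ := hPne
  obtain ⟨y, hy⟩ := hRne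
  rw [disjoint_left] at hPR
  obtain ⟨C, -, hC⟩ := exists_isArc_of_joinedIn
    (joinedIn_univ.2 (PathConnectedSpace.joined x y)) fun h => hPR hx (h ▸ hy)
  obtain ⟨q, hq, A, -, hA, hAR⟩ :=
    hC.exists_subset_inter_eq_singleton hR (hPR hx) ⟨y, hC.right_mem, hy⟩
  obtain ⟨p, -, B, hBA, hB, hBP⟩ :=
    hA.symm.exists_subset_inter_eq_singleton hP (fun h => hPR h hq) ⟨x, hA.left_mem, hx⟩
  exact ⟨q, p, B, hB, subset_antisymm ((inter_subset_inter_left R hBA).trans hAR.subset)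
    (singleton_subset_iff.2 ⟨hB.left_mem, hq⟩), hBP⟩

/-- Path connected closed subsets which are neighborhood extensors: these are assembled from
the maximal cyclic sets and arcs joining them. -/
structure IsSkeleton (P : Set X) : Prop where
  isClosed : IsClosed P
  isPathConnected : IsPathConnected P
  isNhdExtensor : IsNhdExtensor P

theorem IsSkeleton.nonempty (hP : IsSkeleton P) : P.Nonempty := hP.isPathConnected.nonempty

theorem isSkeleton_singleton (p : X) : IsSkeleton {p} where
  isClosed := isClosed_singleton
  isPathConnected := isPathConnected_singleton p
  isNhdExtensor := isNhdExtensor_singleton p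

theorem IsArc.isSkeleton (h : IsArc A p q) : IsSkeleton A where
  isClosed := h.isClosed
  isPathConnected := by
    obtain ⟨f, hf, -, -, -, rfl⟩ := h
    exact ((convex_Icc (0 : ℝ) 1).isPathConnected ⟨0, by simp⟩).image' hf
  isNhdExtensor := h.isNhdExtensor

theorem MaximalCyclic.isPathConnected (hT : MaximalCyclic T) : IsPathConnected T :=
  isPathConnected_iff.2 ⟨hT.nonempty, fun _ hx _ hy => hT.2.1.joinedIn hx hy⟩

theorem MaximalCyclic.isSkeleton [CompactSpace X] (hT : MaximalCyclic T) (hTc : IsClosed T)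
    (hTA : IsANR T) : IsSkeleton T where
  isClosed := hTc
  isPathConnected := hT.isPathConnected
  isNhdExtensor :=
    have := isCompact_iff_compactSpace.1 hTc.isCompact
    isNhdExtensor_univ_subtype_iff.1 hTA.isNhdExtensor_univ

theorem IsSkeleton.union (hP : IsSkeleton P) (hQ : IsSkeleton Q) (hPQ : P ∩ Q = {p}) :
    IsSkeleton (P ∪ Q) where
  isClosed := hP.isClosed.union hQ.isClosed
  isPathConnected := hP.isPathConnected.union hQ.isPathConnected (hPQ ▸ singleton_nonempty p)
  isNhdExtensor := hP.isNhdExtensor.union_of_isClosed hQ.isNhdExtensor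
    (hPQ ▸ isNhdExtensor_singleton p) hP.isClosed hQ.isClosed

/-- Every maximal cyclic set is contained in `P` or meets it in at most one point. -/
def IsSaturated (P : Set X) : Prop :=
  ∀ T, MaximalCyclic T → T ⊆ P ∨ (T ∩ P).Subsingleton

theorem isSaturated_singleton (p : X) : IsSaturated {p} := fun _ _ =>
  Or.inr (subsingleton_singleton.anti inter_subset_right)

theorem IsSaturated.noChord (h : IsSaturated P) (hP : IsPathConnected P) : NoChord P := by
  intro u hu v hv A hA hAP
  obtain ⟨B, hBP, hB⟩ := exists_isArc_of_joinedIn (hP.joinedIn u hu v hv) hA.ne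
  have hJ : IsJordanCurve (A ∪ B) :=
    hA.isJordanCurve_union hB ((inter_subset_inter_right _ hBP).trans hAP)
  have hcyc : CyclicallyConnected (A ∪ B) := fun x hx y hy => ⟨A ∪ B, subset_rfl, hJ, hx, hy⟩
  obtain ⟨S, hS, hJS⟩ := hcyc.exists_maximalCyclic fun h =>
    hA.ne (h (Or.inl hA.left_mem) (Or.inl hA.right_mem))
  have hAS : A ⊆ S := subset_union_left.trans hJS
  rcases h S hS with hSP | hSP
  · obtain ⟨c, hc, hcu, hcv⟩ := hA.exists_mem_ne_ne
    exact (hAP ⟨hc, hSP (hAS hc)⟩).elim hcu hcv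
  · exact hA.ne (hSP ⟨hAS hA.left_mem, hu⟩ ⟨hAS hA.right_mem, hv⟩)

theorem IsSkeleton.isSaturated_union [PathConnectedSpace X] (hP : IsSkeleton P)
    (hPs : IsSaturated P) (hQ : IsSkeleton Q) (hPQ : P ∩ Q = {p})
    (hQs : ∀ T, MaximalCyclic T → ¬ T ⊆ P → T ⊆ Q ∨ (T ∩ Q).Subsingleton) :
    IsSaturated (P ∪ Q) := by
  intro T hT
  by_cases hTP : T ⊆ P
  · exact Or.inl (hTP.trans subset_union_left)
  rcases hQs T hT hTP with hTQ | hTQ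
  · exact Or.inl (hTQ.trans subset_union_right)
  have hTP' : (T ∩ P).Subsingleton := (hPs T hT).resolve_left hTP
  have hch := hPs.noChord hP.isPathConnected
  have hp : p ∈ P ∩ Q := hPQ ▸ mem_singleton p
  -- The points of `T` and of `Q` each enter `P` at a single point, so `a` is the entry point `p`.
  have hmix : ∀ a ∈ T ∩ P, ∀ b ∈ T ∩ Q, a = b := by
    intro a ha b hb
    have hab := hch.entryPoint_eq_of_subsingleton hP.isClosed hP.nonempty
      hT.isPathConnected.joinedIn hTP' ha.1 hb.1
    have hpb := hch.entryPoint_eq_of_subsingleton hP.isClosed hP.nonempty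
      hQ.isPathConnected.joinedIn (by rw [inter_comm, hPQ]; exact subsingleton_singleton)
      hp.2 hb.2
    rw [hch.entryPoint_of_mem ha.2] at hab
    rw [hch.entryPoint_of_mem hp.1, ← hab] at hpb
    exact hTQ ⟨ha.1, hpb ▸ hp.2⟩ hb
  right
  rintro a ⟨haT, ha | ha⟩ b ⟨hbT, hb | hb⟩
  · exact hTP' ⟨haT, ha⟩ ⟨hbT, hb⟩
  · exact hmix a ⟨haT, ha⟩ b ⟨hbT, hb⟩
  · exact (hmix b ⟨hbT, hb⟩ a ⟨haT, ha⟩).symm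
  · exact hTQ ⟨haT, ha⟩ ⟨hbT, hb⟩

theorem IsSkeleton.exists_superset_inter_eq_singleton [PathConnectedSpace X] (hP : IsSkeleton P)
    (hPs : IsSaturated P) (hcl : ∀ T : Set X, MaximalCyclic T → IsClosed T)
    (hfin : {T : Set X | MaximalCyclic T}.Finite) (hT : MaximalCyclic T) (hTP : ¬ T ⊆ P) :
    ∃ P', P ⊆ P' ∧ IsSkeleton P' ∧ IsSaturated P' ∧
      ∃ S, MaximalCyclic S ∧ ¬ S ⊆ P ∧ ∃ q, P' ∩ S = {q} := by
  let R : Set X := ⋃₀ {S | MaximalCyclic S ∧ ¬ S ⊆ P}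
  have subset_R : ∀ S, MaximalCyclic S → ¬ S ⊆ P → S ⊆ R := fun S hS hSP =>
    subset_sUnion_of_mem ⟨hS, hSP⟩
  have hR : IsClosed R := by
    rw [show R = _ from sUnion_eq_biUnion]
    exact (hfin.subset fun S hS => hS.1).isClosed_biUnion fun S hS => hcl S hS.1
  by_cases hPR : Disjoint P R
  · obtain ⟨q, p, B, hB, hBR, hBP⟩ := exists_isArc_inter_eq_singleton hP.isClosed hP.nonempty hR
      (hT.nonempty.mono (subset_R T hT hTP)) hPR
    obtain ⟨S, ⟨hS, hSP⟩, hqS⟩ : q ∈ R := (hBR ▸ mem_singleton q : q ∈ B ∩ R).2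
    have hPB : P ∩ B = {p} := by rw [inter_comm, hBP]
    have inter_B : ∀ S, MaximalCyclic S → ¬ S ⊆ P → (S ∩ B).Subsingleton := fun S hS hSP => by
      rw [inter_comm]
      exact subsingleton_singleton.anti
        ((inter_subset_inter_right B (subset_R S hS hSP)).trans hBR.subset)
    have hs := hP.isSaturated_union hPs hB.isSkeleton hPB fun S hS hSP => Or.inr (inter_B S hS hSP)
    have hSPB : ¬ S ⊆ P ∪ B := hS.2.1.not_subset_union_of_subsingleton hS.1
      ((hPs S hS).resolve_left hSP) (inter_B S hS hSP)
    refine ⟨P ∪ B, subset_union_left, hP.union hB.isSkeleton hPB, hs, S, hS, hSP, q, ?_⟩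
    rw [inter_comm]
    exact ((hs S hS).resolve_left hSPB).eq_singleton_of_mem ⟨hqS, Or.inr hB.left_mem⟩
  · obtain ⟨q, hqP, S, ⟨hS, hSP⟩, hqS⟩ := not_disjoint_iff.1 hPR
    refine ⟨P, subset_rfl, hP, hPs, S, hS, hSP, q, ?_⟩
    rw [inter_comm]
    exact ((hPs S hS).resolve_left hSP).eq_singleton_of_mem ⟨hqS, hqP⟩

theorem IsSkeleton.exists_superset_maximalCyclic [PathConnectedSpace X] (hP : IsSkeleton P)
    (hPs : IsSaturated P) (hsk : ∀ T : Set X, MaximalCyclic T → IsSkeleton T)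
    (hfin : {T : Set X | MaximalCyclic T}.Finite) :
    ∃ P' : Set X, IsSkeleton P' ∧ ∀ T, MaximalCyclic T → T ⊆ P' := by
  induction hn : {T | MaximalCyclic T ∧ ¬ T ⊆ P}.ncard using Nat.strong_induction_on
    generalizing P with
  | _ n ih =>
    by_cases hall : ∀ T, MaximalCyclic T → T ⊆ P
    · exact ⟨P, hP, hall⟩
    push Not at hall
    obtain ⟨T, hT, hTP⟩ := hall
    obtain ⟨P', hPP', hP', hPs', S, hS, hSP, q, hSq⟩ :=
      hP.exists_superset_inter_eq_singleton hPs (fun T hT => (hsk T hT).isClosed) hfin hT hTP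
    have hs : IsSaturated (P' ∪ S) := hP'.isSaturated_union hPs' (hsk S hS) hSq fun T hT _ => by
      by_cases hTS : S = T
      · exact Or.inl hTS.ge
      · exact Or.inr (hS.inter_subsingleton (hsk S hS).isClosed hT hTS)
    refine ih _ ?_ (hP'.union (hsk S hS) hSq) hs rfl
    rw [← hn]
    refine ncard_lt_ncard ⟨fun T hT => ⟨hT.1, fun h => hT.2 (h.trans (hPP'.trans
      subset_union_left))⟩, fun h => ?_⟩ (hfin.subset fun T hT => hT.1)
    exact (h ⟨hS, hSP⟩).2 subset_union_right

theorem exists_isSkeleton_superset_maximalCyclic [PathConnectedSpace X]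
    (hsk : ∀ T : Set X, MaximalCyclic T → IsSkeleton T)
    (hfin : {T : Set X | MaximalCyclic T}.Finite) :
    ∃ P : Set X, IsSkeleton P ∧ ∀ T, MaximalCyclic T → T ⊆ P := by
  obtain ⟨x⟩ : Nonempty X := PathConnectedSpace.nonempty
  exact (isSkeleton_singleton x).exists_superset_maximalCyclic (isSaturated_singleton x) hsk hfin

end Skeleta

/-! ### Telescopes of homotopies -/

section Telescope

open Filter Topology

theorem IsNhdExtensor.exists_homotopy_extension_of_isClosed {X Y : Type} [TopologicalSpace X]
    [MetricSpace Y] {P : Set X} (hP : IsNhdExtensor P) {A C : Set Y} (hA : IsClosed A)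
    (hC : IsClosed C) {E₀ E₁ : Y → X} (hE₀ : ContinuousOn E₀ C) (hE₁ : ContinuousOn E₁ C)
    (hm₀ : MapsTo E₀ C P) (hm₁ : MapsTo E₁ C P) {k : Y × ℝ → X}
    (hk : ContinuousOn k (A ×ˢ Icc 0 1)) (hkm : MapsTo k (A ×ˢ Icc 0 1) P)
    (hk₀ : ∀ y ∈ A ∩ C, k (y, 0) = E₀ y) (hk₁ : ∀ y ∈ A ∩ C, k (y, 1) = E₁ y) :
    ∃ (U : Set (Y × ℝ)) (h : Y × ℝ → X), IsOpen U ∧ A ×ˢ Icc 0 1 ⊆ U ∧ ContinuousOn h U ∧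
      EqOn h k (A ×ˢ Icc 0 1) ∧ ∀ y ∈ C, h (y, 0) = E₀ y ∧ h (y, 1) = E₁ y := by
  have isClosed_end (t : ℝ) : IsClosed (C ×ˢ {t}) := hC.prod isClosed_singleton
  have mapsTo_fst (t : ℝ) : MapsTo Prod.fst (C ×ˢ {t}) C := fun z hz => hz.1
  obtain ⟨V, g, -, hV, hg, hgm, hg₀, hg₁⟩ := hP.exists_extension_union (isClosed_end 0)
    (isClosed_end 1) (hE₀.comp continuousOn_fst (mapsTo_fst 0))
    (hE₁.comp continuousOn_fst (mapsTo_fst 1)) (hm₀.comp (mapsTo_fst 0))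
    (hm₁.comp (mapsTo_fst 1)) fun z hz =>
      (zero_ne_one ((hz.1.2 : z.2 = 0).symm.trans hz.2.2)).elim
  obtain ⟨U, h, hU, hAU, hh, -, hhk, hhg⟩ := hP.exists_extension_union
    (hA.prod isClosed_Icc) ((isClosed_end 0).union (isClosed_end 1)) hk (hg.mono hV) hkm
    (hgm.mono_left hV) (by
      rintro ⟨y, t⟩ ⟨⟨hy, -⟩, ⟨hyC, rfl⟩ | ⟨hyC, rfl⟩⟩
      · exact (hk₀ y ⟨hy, hyC⟩).trans (hg₀ ⟨hyC, rfl⟩).symm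
      · exact (hk₁ y ⟨hy, hyC⟩).trans (hg₁ ⟨hyC, rfl⟩).symm)
  exact ⟨U, h, hU, subset_union_left.trans hAU, hh, hhk, fun y hy =>
    have mem_end (t : ℝ) : (y, t) ∈ C ×ˢ {t} := ⟨hy, rfl⟩
    ⟨(hhg (Or.inl (mem_end 0))).trans (hg₀ (mem_end 0)),
      (hhg (Or.inr (mem_end 1))).trans (hg₁ (mem_end 1))⟩⟩

theorem IsNhdExtensor.exists_homotopy_extension {X Y : Type} [TopologicalSpace X]
    [MetricSpace Y] {P : Set X} (hP : IsNhdExtensor P) {A O : Set Y} (hA : IsCompact A)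
    (hne : A.Nonempty) (hO : IsOpen O) (hAO : A ⊆ O) {E₀ E₁ : Y → X} (hE₀ : ContinuousOn E₀ O)
    (hE₁ : ContinuousOn E₁ O) (hm₀ : MapsTo E₀ O P) (hm₁ : MapsTo E₁ O P) {k : Y × ℝ → X}
    (hk : ContinuousOn k (A ×ˢ Icc 0 1)) (hkm : MapsTo k (A ×ˢ Icc 0 1) P)
    (hk₀ : ∀ y ∈ A, k (y, 0) = E₀ y) (hk₁ : ∀ y ∈ A, k (y, 1) = E₁ y) {N : Set (Y × X)}
    (hN : IsOpen N) (hkN : ∀ y ∈ A, ∀ t ∈ Icc (0 : ℝ) 1, (y, k (y, t)) ∈ N) :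
    ∃ δ > 0, ∃ h : Y × ℝ → X, ContinuousOn h (((infDist · A) ⁻¹' Iio δ) ×ˢ Icc 0 1) ∧
      ∀ y, infDist y A < δ → h (y, 0) = E₀ y ∧ h (y, 1) = E₁ y ∧
        ∀ t ∈ Icc (0 : ℝ) 1, (y, h (y, t)) ∈ N := by
  obtain ⟨W, hW, hAW, hWO⟩ := normal_exists_closure_subset hA.isClosed hO hAO
  obtain ⟨U, h, hU, hAU, hh, hhk, hhE⟩ := hP.exists_homotopy_extension_of_isClosed hA.isClosed
    isClosed_closure (hE₀.mono hWO) (hE₁.mono hWO) (hm₀.mono_left hWO) (hm₁.mono_left hWO) hk hkm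
    (fun y hy => hk₀ y hy.1) (fun y hy => hk₁ y hy.1)
  obtain ⟨V, I, hV, -, hAV, hI, hVI⟩ := generalized_tube_lemma hA (isCompact_Icc (a := (0 : ℝ))
    (b := 1)) ((continuousOn_fst.prodMk hh).isOpen_inter_preimage hU hN) (by
      rintro ⟨y, t⟩ ⟨hy, ht⟩
      refine ⟨hAU ⟨hy, ht⟩, ?_⟩
      rw [mem_preimage, hhk ⟨hy, ht⟩]
      exact hkN y hy t ht)
  obtain ⟨δ, hδ, hδV⟩ := hA.exists_thickening_subset_open (hV.inter hW) (subset_inter hAV hAW)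
  have subset_VW : ∀ y, infDist y A < δ → y ∈ V ∩ W := fun y hy =>
    hδV ((mem_thickening_iff_infDist_lt hne).2 hy)
  refine ⟨δ, hδ, h, hh.mono ?_, fun y hy => ?_⟩
  · rintro ⟨y, t⟩ ⟨hy, ht⟩
    exact (hVI (mk_mem_prod (subset_VW y hy).1 (hI ht))).1
  · obtain ⟨hyV, hyW⟩ := subset_VW y hy
    obtain ⟨h₀, h₁⟩ := hhE y (subset_closure hyW)
    exact ⟨h₀, h₁, fun t ht => (hVI (mk_mem_prod hyV (hI ht))).2⟩

theorem exists_strictAnti_tendsto_zero_lt {ε : ℕ → ℝ} (hε : ∀ n, 0 < ε n) :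
    ∃ δ : ℕ → ℝ, StrictAnti δ ∧ (∀ n, 0 < δ n) ∧ (∀ n, δ n < ε n) ∧
      Tendsto δ atTop (𝓝 0) := by
  let δ : ℕ → ℝ := Nat.rec (ε 0 / 2) fun n d => min d (ε (n + 1)) / 2
  have pos : ∀ n, 0 < δ n := fun n => by
    induction n with
    | zero => exact half_pos (hε 0)
    | succ n ih => exact half_pos (lt_min ih (hε _))
  have le_half : ∀ n, δ (n + 1) ≤ δ n / 2 := fun n =>
    div_le_div_of_nonneg_right (min_le_left _ _) zero_le_two
  refine ⟨δ, strictAnti_nat_of_succ_lt fun n => (le_half n).trans_lt (half_lt_self (pos n)), pos,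
    fun n => ?_, ?_⟩
  · cases n with
    | zero => exact half_lt_self (hε 0)
    | succ n =>
      exact (div_le_div_of_nonneg_right (min_le_right _ _) zero_le_two).trans_lt
        (half_lt_self (hε _))
  · have le_geometric : ∀ n, δ n ≤ δ 0 * (1 / 2) ^ n := fun n => by
      induction n with
      | zero => simp
      | succ n ih =>
        rw [pow_succ]
        linarith [le_half n]
    refine squeeze_zero (fun n => (pos n).le) le_geometric ?_
    simpa using (tendsto_pow_atTop_nhds_zero_of_lt_one (r := (1 / 2 : ℝ)) (by norm_num)
      (by norm_num)).const_mul (δ 0)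

theorem exists_mem_Icc_succ_of_tendsto_zero {δ : ℕ → ℝ} (hδ : Tendsto δ atTop (𝓝 0)) {r : ℝ}
    (hr : 0 < r) {N : ℕ} (hrN : r ≤ δ N) : ∃ n ≥ N, r ∈ Icc (δ (n + 1)) (δ n) := by
  by_contra! hn
  have le_δ : ∀ n ≥ N, r ≤ δ n := Nat.le_induction hrN fun n hNn ih => by
    by_contra! hlt
    exact hn n hNn ⟨hlt.le, ih⟩
  exact hr.not_ge (ge_of_tendsto hδ (eventually_atTop.2 ⟨N, le_δ⟩))

variable {X Y : Type*} [TopologicalSpace X] [TopologicalSpace Y] {ρ : Y → ℝ}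

theorem continuousOn_preimage_Ioo_of_preimage_Icc_succ (hρ : Continuous ρ) {δ : ℕ → ℝ}
    (hδ : Tendsto δ atTop (𝓝 0)) {R : Y → X}
    (hR : ∀ n, ContinuousOn R (ρ ⁻¹' Icc (δ (n + 1)) (δ n))) :
    ContinuousOn R (ρ ⁻¹' Ioo 0 (δ 0)) := by
  have hRn : ∀ n, ContinuousOn R (ρ ⁻¹' Icc (δ (n + 1)) (δ 0)) := fun n => by
    induction n with
    | zero => exact hR 0
    | succ n ih =>
      refine (ih.union_of_isClosed (hR (n + 1)) (isClosed_Icc.preimage hρ)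
        (isClosed_Icc.preimage hρ)).mono fun y hy => ?_
      exact (le_total (δ (n + 1)) (ρ y)).imp (fun h => ⟨h, hy.2⟩) fun h => ⟨hy.1, h⟩
  intro y hy
  obtain ⟨n, hn⟩ := ((hδ.comp (tendsto_add_atTop_nat 1)).eventually_lt_const hy.1).exists
  exact ((hRn n).continuousAt
    (hρ.continuousAt.preimage_mem_nhds (Icc_mem_nhds hn hy.2))).continuousWithinAt

theorem exists_continuousOn_of_homotopies (hρ : Continuous ρ) {ε : ℕ → ℝ} (hε : ∀ n, 0 < ε n)
    {h : ℕ → Y × ℝ → X} (hh : ∀ n, ContinuousOn (h n) ((ρ ⁻¹' Iio (ε n)) ×ˢ Icc 0 1))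
    (hsucc : ∀ n y, ρ y < ε n → ρ y < ε (n + 1) → h n (y, 1) = h (n + 1) (y, 0)) :
    ∃ δ > 0, ∃ R : Y → X, ContinuousOn R (ρ ⁻¹' Ioo 0 δ) ∧
      ∀ N, ∃ η > 0, ∀ y, ρ y ∈ Ioo 0 η → ∃ n ≥ N, ρ y < ε n ∧
        ∃ t ∈ Icc (0 : ℝ) 1, R y = h n (y, t) := by
  classical
  obtain ⟨δ, hanti, hpos, hδε, hlim⟩ := exists_strictAnti_tendsto_zero_lt hε
  have gap : ∀ n, 0 < δ n - δ (n + 1) := fun n => sub_pos.2 (hanti n.lt_succ_self)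
  let τ : ℕ → Y → ℝ := fun n y => (δ n - ρ y) / (δ n - δ (n + 1))
  have τ_mem : ∀ {n y}, ρ y ∈ Icc (δ (n + 1)) (δ n) → τ n y ∈ Icc (0 : ℝ) 1 := fun {n y} hy =>
    ⟨div_nonneg (sub_nonneg.2 hy.2) (gap n).le,
      (div_le_one (gap n)).2 (sub_le_sub_left hy.1 _)⟩
  have agree : ∀ {m n y}, ρ y ∈ Icc (δ (m + 1)) (δ m) → ρ y ∈ Icc (δ (n + 1)) (δ n) → m < n →
      h m (y, τ m y) = h n (y, τ n y) := fun {m n y} hm hn hmn => by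
    obtain rfl : n = m + 1 := le_antisymm (hanti.le_iff_ge.1 (hm.1.trans hn.2)) hmn
    have hy : ρ y = δ (m + 1) := le_antisymm hn.2 hm.1
    have h₁ : τ m y = 1 := by simpa only [τ, hy] using div_self (gap m).ne'
    have h₀ : τ (m + 1) y = 0 := by simp only [τ, hy, sub_self, zero_div]
    rw [h₁, h₀, hsucc m y (hm.2.trans_lt (hδε m)) (hn.2.trans_lt (hδε _))]
  let R : Y → X := fun y =>
    let n := if hy : ∃ n, ρ y ∈ Icc (δ (n + 1)) (δ n) then hy.choose else 0
    h n (y, τ n y)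
  have R_eq : ∀ {n y}, ρ y ∈ Icc (δ (n + 1)) (δ n) → R y = h n (y, τ n y) := fun {n y} hy => by
    have hex : ∃ n, ρ y ∈ Icc (δ (n + 1)) (δ n) := ⟨n, hy⟩
    simp only [R, dif_pos hex]
    rcases lt_trichotomy hex.choose n with hlt | heq | hlt
    · exact agree hex.choose_spec hy hlt
    · rw [heq]
    · exact (agree hy hex.choose_spec hlt).symm
  have hτ : ∀ n, Continuous (τ n) := fun n => (continuous_const.sub hρ).div_const _
  refine ⟨δ 0, hpos 0, R, continuousOn_preimage_Ioo_of_preimage_Icc_succ hρ hlim fun n => ?_,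
    fun N => ⟨δ N, hpos N, fun y hy => ?_⟩⟩
  · exact ((hh n).comp (continuous_id.prodMk (hτ n)).continuousOn fun y hy =>
      ⟨hy.2.trans_lt (hδε n), τ_mem hy⟩).congr fun y hy => R_eq hy
  · obtain ⟨n, hn, hyn⟩ := exists_mem_Icc_succ_of_tendsto_zero hlim hy.1 hy.2.le
    exact ⟨n, hn, hyn.2.trans_lt (hδε n), τ n y, τ_mem hyn, R_eq hyn⟩

theorem continuousOn_piecewise_id_of_tendsto {A O : Set Y} [DecidablePred (· ∈ A)]
    (hA : IsClosed A) (hO : IsOpen O) {R : Y → Y} (hR : ContinuousOn R (O \ A))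
    (hRA : ∀ y ∈ A, Tendsto R (𝓝[Aᶜ] y) (𝓝 y)) : ContinuousOn (A.piecewise id R) O := by
  intro y hyO
  by_cases hyA : y ∈ A
  · refine ContinuousAt.continuousWithinAt ?_
    rw [ContinuousAt, piecewise_eq_of_mem _ _ _ hyA, ← nhdsWithin_univ, ← union_compl_self A,
      nhdsWithin_union]
    refine Tendsto.sup ?_ ?_
    · exact tendsto_id.mono_left inf_le_left |>.congr' <|
        eventually_mem_nhdsWithin.mono fun z hz => (piecewise_eq_of_mem _ _ _ hz).symm
    · exact (hRA y hyA).congr' <|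
        eventually_mem_nhdsWithin.mono fun z hz => (piecewise_eq_of_notMem _ _ _ hz).symm
  · have hnhds : O \ A ∈ 𝓝 y := (hO.sdiff hA).mem_nhds ⟨hyO, hyA⟩
    refine ((hR.continuousAt hnhds).congr ?_).continuousWithinAt
    filter_upwards [hnhds] with z hz using (piecewise_eq_of_notMem _ _ _ hz.2).symm

end Telescope

section HomotopySequence

open Filter Topology

theorem continuousOn_invFun_range {X Y : Type*} [TopologicalSpace X] [TopologicalSpace Y]
    [Nonempty X] {e : X → Y} (he : IsEmbedding e) :
    ContinuousOn (Function.invFun e) (range e) := by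
  rw [he.isInducing.continuousOn_iff]
  refine continuousOn_id.congr ?_
  rintro _ ⟨x, rfl⟩
  exact congrArg e (Function.leftInverse_invFun he.injective x)

variable {X : Type} [MetricSpace X] [CompactSpace X] [Nonempty X] {Y : Type} [MetricSpace Y]
  {e : X → Y}

theorem IsNhdExtensor.exists_homotopy_extension_range {Q : Set X} (hQ : IsNhdExtensor Q)
    (he : IsClosedEmbedding e) {O : Set Y} (hO : IsOpen O) (hrO : range e ⊆ O) {E₀ E₁ : Y → X}
    (hE₀ : ContinuousOn E₀ O) (hE₁ : ContinuousOn E₁ O) (hm₀ : MapsTo E₀ O Q)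
    (hm₁ : MapsTo E₁ O Q) {k : X × ℝ → X} (hk : Continuous k) (hkQ : ∀ z, k z ∈ Q)
    (hk₀ : ∀ x, k (x, 0) = E₀ (e x)) (hk₁ : ∀ x, k (x, 1) = E₁ (e x)) {c : ℝ} (hc : 0 < c) :
    ∃ δ > 0, ∃ h : Y × ℝ → X, ContinuousOn h (((infDist · (range e)) ⁻¹' Iio δ) ×ˢ Icc 0 1) ∧
      ∀ y, infDist y (range e) < δ → h (y, 0) = E₀ y ∧ h (y, 1) = E₁ y ∧
        ∀ t ∈ Icc (0 : ℝ) 1, ∃ z, dist y (e z.1) < c ∧ dist (e (h (y, t))) (e (k z)) < c := by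
  let i : Y → X := Function.invFun e
  have hie : ∀ x, i (e x) = x := Function.leftInverse_invFun he.injective
  have hi : ContinuousOn i (range e) := continuousOn_invFun_range he.isEmbedding
  obtain ⟨δ, hδ, h, hh, hhE⟩ := hQ.exists_homotopy_extension (k := fun z => k (i z.1, z.2))
    (N := ⋃ z, ball (e z.1) c ×ˢ (e ⁻¹' ball (e (k z)) c))
    (isCompact_range he.continuous) (range_nonempty e) hO hrO hE₀ hE₁ hm₀ hm₁
    (hk.comp_continuousOn ((hi.comp continuousOn_fst fun z hz => hz.1).prodMk continuousOn_snd))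
    (fun z _ => hkQ _) (forall_mem_range.2 fun x => by simp only [hie, hk₀])
    (forall_mem_range.2 fun x => by simp only [hie, hk₁])
    (isOpen_iUnion fun z => isOpen_ball.prod (isOpen_ball.preimage he.continuous))
    (forall_mem_range.2 fun x t _ => by
      rw [hie]
      exact mem_iUnion.2 ⟨(x, t), mem_ball_self hc, mem_ball_self (α := Y) hc⟩)
  refine ⟨δ, hδ, h, hh, fun y hy => ⟨(hhE y hy).1, (hhE y hy).2.1, fun t ht => ?_⟩⟩
  obtain ⟨z, hz⟩ := mem_iUnion.1 ((hhE y hy).2.2 t ht)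
  exact ⟨z, hz⟩

variable {P : ℕ → Set X} {K : ℕ → X × ℝ → X}

theorem exists_extension_homotopies (hPm : Monotone P)
    (hP : ∀ n, IsNhdExtensor (P n)) (hK : ∀ n, Continuous (K n)) (hKP : ∀ n z, K n z ∈ P (n + 1))
    (hK₀ : ∀ n x, K n (x, 0) ∈ P n) (hK₁ : ∀ n x, K n (x, 1) = K (n + 1) (x, 0))
    (he : IsClosedEmbedding e) {c : ℕ → ℝ} (hc : ∀ n, 0 < c n) :
    ∃ (ε : ℕ → ℝ) (h : ℕ → Y × ℝ → X), (∀ n, 0 < ε n) ∧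
      (∀ n, ContinuousOn (h n) (((infDist · (range e)) ⁻¹' Iio (ε n)) ×ˢ Icc 0 1)) ∧
      (∀ n y, infDist y (range e) < ε n → infDist y (range e) < ε (n + 1) →
        h n (y, 1) = h (n + 1) (y, 0)) ∧
      ∀ n y, infDist y (range e) < ε n → ∀ t ∈ Icc (0 : ℝ) 1,
        ∃ z, dist y (e z.1) < c n ∧ dist (e (h n (y, t))) (e (K n z)) < c n := by
  have hK₀c : ∀ n, Continuous fun x => K n (x, 0) := fun n =>
    (hK n).comp (continuous_id.prodMk continuous_const)
  choose O E hO hAO hEc hEm hEr using fun n =>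
    hP n Y (range e) (fun y => K n (Function.invFun e y, 0)) he.isClosed_range
      ((hK₀c n).comp_continuousOn (continuousOn_invFun_range he.isEmbedding)) fun y _ => hK₀ n _
  have E_eq : ∀ n x, K n (x, 0) = E n (e x) := fun n x => by
    simp only [hEr n (mem_range_self x), Function.leftInverse_invFun he.injective x]
  choose ε hε h hh hhE using fun n =>
    (hP (n + 1)).exists_homotopy_extension_range he ((hO n).inter (hO (n + 1)))
      (subset_inter (hAO n) (hAO (n + 1))) ((hEc n).mono inter_subset_left)
      ((hEc (n + 1)).mono inter_subset_right)
      (((hEm n).mono_right (hPm n.le_succ)).mono_left inter_subset_left)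
      ((hEm (n + 1)).mono_left inter_subset_right) (hK n) (hKP n) (E_eq n)
      (fun x => (hK₁ n x).trans (E_eq (n + 1) x)) (hc n)
  exact ⟨ε, h, hε, hh, fun n y hy hy' => (hhE n y hy).2.1.trans (hhE (n + 1) y hy').1.symm,
    fun n y hy => (hhE n y hy).2.2⟩

theorem exists_continuousOn_tendsto_of_homotopies (hPm : Monotone P)
    (hP : ∀ n, IsNhdExtensor (P n)) (hK : ∀ n, Continuous (K n)) (hKP : ∀ n z, K n z ∈ P (n + 1))
    (hK₀ : ∀ n x, K n (x, 0) ∈ P n) (hK₁ : ∀ n x, K n (x, 1) = K (n + 1) (x, 0))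
    (hlim : TendstoUniformly K Prod.fst atTop) (he : IsClosedEmbedding e) :
    ∃ δ > 0, ∃ R : Y → X, ContinuousOn R ((infDist · (range e)) ⁻¹' Ioo 0 δ) ∧
      ∀ y ∈ range e, Tendsto (e ∘ R) (𝓝[(range e)ᶜ] y) (𝓝 y) := by
  let c : ℕ → ℝ := fun n => 1 / ((n : ℝ) + 1)
  have hc : Tendsto c atTop (𝓝 0) := tendsto_one_div_add_atTop_nhds_zero_nat
  obtain ⟨ε, h, hε, hh, hsucc, hhe⟩ := exists_extension_homotopies hPm hP hK hKP hK₀ hK₁ he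
    (c := c) fun n => Nat.one_div_pos_of_nat
  have hρ : Continuous (infDist · (range e)) := continuous_infDist_pt (range e)
  obtain ⟨δ, hδ, R, hR, hRh⟩ := exists_continuousOn_of_homotopies hρ hε hh hsucc
  refine ⟨δ, hδ, R, hR, fun y hy => (tendsto_iff_of_dist ?_).1 (tendsto_id.mono_left inf_le_left)⟩
  have hlim' :=
    (CompactSpace.uniformContinuous_of_continuous he.continuous).comp_tendstoUniformly hlim
  rw [Metric.tendsto_nhds]
  intro κ hκ
  obtain ⟨N, hN⟩ := eventually_atTop.1 ((hc.eventually_lt_const (div_pos hκ three_pos)).and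
    (Metric.tendstoUniformly_iff.1 hlim' (κ / 3) (div_pos hκ three_pos)))
  obtain ⟨η, hη, H⟩ := hRh N
  have hnear : ∀ᶠ w in 𝓝 y, infDist w (range e) < η :=
    hρ.continuousAt.eventually_lt_const ((infDist_zero_of_mem hy).trans_lt hη)
  filter_upwards [nhdsWithin_le_nhds hnear, self_mem_nhdsWithin] with w hwη hw
  have hw0 : 0 < infDist w (range e) :=
    (he.isClosed_range.notMem_iff_infDist_pos (range_nonempty e)).1 hw
  obtain ⟨n, hn, hwn, t, ht, hRw⟩ := H w ⟨hw0, hwη⟩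
  obtain ⟨z, hwz, hzh⟩ := hhe n w hwn t ht
  have hKz : dist (e z.1) (e (K n z)) < κ / 3 := (hN n hn).2 z
  rw [Real.dist_0_eq_abs, abs_of_nonneg dist_nonneg, id, Function.comp_apply, hRw]
  linarith [(hN n hn).1, dist_triangle4_right w (e (h n (w, t))) (e z.1) (e (K n z))]

theorem isANR_of_homotopies (hPm : Monotone P)
    (hP : ∀ n, IsNhdExtensor (P n)) (hK : ∀ n, Continuous (K n)) (hKP : ∀ n z, K n z ∈ P (n + 1))
    (hK₀ : ∀ n x, K n (x, 0) ∈ P n) (hK₁ : ∀ n x, K n (x, 1) = K (n + 1) (x, 0))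
    (hlim : TendstoUniformly K Prod.fst atTop) : IsANR X := by
  classical
  intro Y _ e he
  obtain ⟨δ, hδ, R, hR, hRe⟩ :=
    exists_continuousOn_tendsto_of_homotopies hPm hP hK hKP hK₀ hK₁ hlim he
  have hO : IsOpen ((infDist · (range e)) ⁻¹' Iio δ) :=
    isOpen_Iio.preimage (continuous_infDist_pt _)
  have hS := continuousOn_piecewise_id_of_tendsto he.isClosed_range hO
    (he.continuous.comp_continuousOn (hR.mono fun y hy =>
      ⟨(he.isClosed_range.notMem_iff_infDist_pos (range_nonempty e)).1 hy.2, hy.1⟩)) hRe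
  refine ⟨_, hO, fun y hy => (infDist_zero_of_mem hy).trans_lt hδ, ⟨_, hS.domRestrict⟩,
    fun u => ?_, fun x _ => piecewise_eq_of_mem _ _ _ (mem_range_self x)⟩
  by_cases hu : (u : Y) ∈ range e
  · exact mem_of_eq_of_mem (piecewise_eq_of_mem _ id (e ∘ R) hu) hu
  · exact ⟨R u, (piecewise_eq_of_notMem _ id (e ∘ R) hu).symm⟩

end HomotopySequence

/-! ### Exhaustion by skeleta -/

section Exhaustion

open Filter Topology

variable {X : Type} [MetricSpace X] {A P : Set X} {p x : X}

theorem IsArc.exists_homotopy_union (hA : IsArc A p x) (hP : IsClosed P) (hPA : P ∩ A = {p}) :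
    ∃ H : X × ℝ → X, ContinuousOn H ((P ∪ A) ×ˢ univ) ∧ (∀ z ∈ P, ∀ t, H (z, t) = z) ∧
      ∀ z ∈ A, (∀ t, H (z, t) ∈ A) ∧ H (z, 0) = p ∧ H (z, 1) = z := by
  classical
  obtain ⟨f, g, hf, hfA, hf₀, -, hg, hg₀, hfg⟩ := hA.exists_retraction_param
  let H : X × ℝ → X := fun z => if z.1 ∈ P then z.1 else f (z.2 * g z.1)
  have H_of_mem : ∀ z ∈ P, ∀ t, H (z, t) = z := fun z hz t => if_pos hz
  have H_of_mem_arc : ∀ z ∈ A, ∀ t, H (z, t) = f (t * g z) := fun z hz t => by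
    by_cases hzP : z ∈ P
    · obtain rfl : z = p := hPA.subset ⟨hzP, hz⟩
      rw [H_of_mem z hzP, hg₀, mul_zero, hf₀]
    · exact if_neg hzP
  refine ⟨H, ?_, H_of_mem, fun z hz => ⟨fun t => ?_, ?_, ?_⟩⟩
  · rw [union_prod]
    refine ContinuousOn.union_of_isClosed ?_ ?_ (hP.prod isClosed_univ)
      (hA.isClosed.prod isClosed_univ)
    · exact continuousOn_fst.congr fun z hz => H_of_mem z.1 hz.1 z.2
    · exact (hf.comp_continuousOn (continuousOn_snd.mul
        (hg.comp continuousOn_fst fun z hz => hz.1))).congr fun z hz => H_of_mem_arc z.1 hz.1 z.2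
  · exact H_of_mem_arc z hz t ▸ hfA _
  · rw [H_of_mem_arc z hz, zero_mul, hf₀]
  · rw [H_of_mem_arc z hz, one_mul, hfg z hz]

theorem IsSkeleton.noChord (hP : IsSkeleton P) (hPT : ∀ T, MaximalCyclic T → T ⊆ P) :
    NoChord P :=
  IsSaturated.noChord (fun T hT => Or.inl (hPT T hT)) hP.isPathConnected

theorem tendstoUniformly_entryPoint [CompactSpace X] [LocallyPathConnectedSpace X]
    {P : ℕ → Set X} (hPm : Monotone P) (hPc : ∀ n, IsClosed (P n)) (hP : ∀ n, NoChord (P n))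
    (hd : Dense (⋃ n, P n)) : TendstoUniformly (fun n => entryPoint (P n)) id atTop := by
  rw [Metric.tendstoUniformly_iff]
  intro ε hε
  -- A retraction sends a point into every path connected set joining it to `P n`.
  have eventually_near : ∀ x : X, ∃ W ∈ 𝓝 x, ∀ᶠ n in atTop, ∀ z ∈ W,
      dist z (entryPoint (P n) z) < ε := by
    intro x
    obtain ⟨W, ⟨hWo, hxW, hW⟩, hWε⟩ :=
      (isOpen_isPathConnected_basis x).mem_iff.1 (ball_mem_nhds x (half_pos hε))
    obtain ⟨y, hyW, hy⟩ := hd.inter_open_nonempty W hWo ⟨x, hxW⟩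
    obtain ⟨m, hm⟩ := mem_iUnion.1 hy
    refine ⟨W, hWo.mem_nhds hxW, ?_⟩
    filter_upwards [eventually_ge_atTop m] with n hn z hz
    have hentry : dist (entryPoint (P n) z) x < ε / 2 :=
      hWε ((hP n).entryPoint_mem_of_joinedIn (hPc n) (hW.joinedIn z hz y hyW) (hPm hn hm))
    have hzx : dist z x < ε / 2 := hWε hz
    linarith [dist_triangle_right z (entryPoint (P n) z) x]
  choose W hW hWe using eventually_near
  obtain ⟨t, -, ht⟩ := isCompact_univ.elim_nhds_subcover W fun x _ => hW x
  filter_upwards [(Filter.eventually_all_finset t).2 fun x _ => hWe x] with n hn z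
  obtain ⟨x, hx, hz⟩ := mem_iUnion₂.1 (ht (mem_univ z))
  exact hn x hx z hz

variable [PathConnectedSpace X] [LocallyPathConnectedSpace X]

theorem NoChord.exists_homotopy_entryPoint_union (hch : NoChord P) (hP : IsClosed P)
    (hne : P.Nonempty) (hA : IsArc A p x) (hPA : P ∩ A = {p}) (hchA : NoChord (P ∪ A)) :
    ∃ K : X × ℝ → X, Continuous K ∧ (∀ z, K z ∈ P ∪ A) ∧
      (∀ z, K (z, 0) = entryPoint P z) ∧ (∀ z, K (z, 1) = entryPoint (P ∪ A) z) ∧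
      ∀ z, entryPoint P (K z) = entryPoint P z.1 := by
  obtain ⟨H, hH, hHP, hHA⟩ := hA.exists_homotopy_union hP hPA
  have hQ : IsClosed (P ∪ A) := hP.union hA.isClosed
  have hQne : (P ∪ A).Nonempty := hne.mono subset_union_left
  have hp : p ∈ P := (hPA ▸ mem_singleton p : p ∈ P ∩ A).1
  have entryPoint_arc : ∀ z ∈ A, entryPoint P z = p := fun z hz =>
    (hch.entryPoint_eq_of_subsingleton hP hne hA.isSkeleton.isPathConnected.joinedIn
      (by rw [inter_comm, hPA]; exact subsingleton_singleton) hz hA.left_mem).trans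
      (hch.entryPoint_of_mem hp)
  have entryPoint_mem : ∀ z, entryPoint (P ∪ A) z ∈ P ∪ A := fun z =>
    (entryPoint_spec hQ hQne z).1
  have entryPoint_comp : ∀ z, entryPoint P (entryPoint (P ∪ A) z) = entryPoint P z :=
    hch.entryPoint_entryPoint hP hne hQ subset_union_left
  refine ⟨fun z => H (entryPoint (P ∪ A) z.1, z.2), ?_, fun z => ?_, fun z => ?_, fun z => ?_,
    fun z => ?_⟩
  · exact hH.comp_continuous (((hchA.continuous_entryPoint hQ hQne).comp continuous_fst).prodMk
      continuous_snd) fun z => ⟨entryPoint_mem z.1, mem_univ _⟩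
  · rcases entryPoint_mem z.1 with h | h
    · exact Or.inl (mem_of_eq_of_mem (hHP _ h _) h)
    · exact Or.inr ((hHA _ h).1 _)
  · rw [← entryPoint_comp z]
    rcases entryPoint_mem z with h | h
    · exact (hHP _ h _).trans (hch.entryPoint_of_mem h).symm
    · exact (hHA _ h).2.1.trans (entryPoint_arc _ h).symm
  · rcases entryPoint_mem z with h | h
    · exact hHP _ h _
    · exact (hHA _ h).2.2
  · rw [← entryPoint_comp z.1]
    rcases entryPoint_mem z.1 with h | h
    · exact congrArg _ (hHP _ h _)
    · exact (entryPoint_arc _ ((hHA _ h).1 _)).trans (entryPoint_arc _ h).symm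

theorem IsSkeleton.exists_superset_mem (hP : IsSkeleton P) (hPT : ∀ T, MaximalCyclic T → T ⊆ P)
    (x : X) :
    ∃ Q, P ⊆ Q ∧ IsSkeleton Q ∧ x ∈ Q ∧ ∃ K : X × ℝ → X, Continuous K ∧ (∀ z, K z ∈ Q) ∧
      (∀ z, K (z, 0) = entryPoint P z) ∧ (∀ z, K (z, 1) = entryPoint Q z) ∧
      ∀ z, entryPoint P (K z) = entryPoint P z.1 := by
  have hch := hP.noChord hPT
  by_cases hx : x ∈ P
  · have entryPoint_mem : ∀ z, entryPoint P z ∈ P := fun z =>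
      (entryPoint_spec hP.isClosed hP.nonempty z).1
    exact ⟨P, subset_rfl, hP, hx, fun z => entryPoint P z.1,
      (hch.continuous_entryPoint hP.isClosed hP.nonempty).comp continuous_fst,
      fun z => entryPoint_mem z.1, fun _ => rfl, fun _ => rfl,
      fun z => hch.entryPoint_of_mem (entryPoint_mem z.1)⟩
  obtain ⟨p, q, A, hA, hAP, hAx⟩ := exists_isArc_inter_eq_singleton isClosed_singleton
    (singleton_nonempty x) hP.isClosed hP.nonempty (disjoint_singleton_left.2 hx)
  obtain rfl : q = x := (hAx.symm ▸ mem_singleton q : q ∈ A ∩ {x}).2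
  have hPA : P ∩ A = {p} := by rw [inter_comm, hAP]
  have hQ : IsSkeleton (P ∪ A) := hP.union hA.isSkeleton hPA
  have hchQ := hQ.noChord fun T hT => (hPT T hT).trans subset_union_left
  exact ⟨P ∪ A, subset_union_left, hQ, Or.inr hA.right_mem,
    hch.exists_homotopy_entryPoint_union hP.isClosed hP.nonempty hA hPA hchQ⟩

theorem IsSkeleton.isANR [CompactSpace X] (hP : IsSkeleton P)
    (hPT : ∀ T, MaximalCyclic T → T ⊆ P) : IsANR X := by
  have hne : Nonempty X := PathConnectedSpace.nonempty
  choose! Q hPQ hQ hxQ K hK hKQ hK₀ hK₁ hKP using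
    fun (P : Set X) (h : IsSkeleton P ∧ ∀ T, MaximalCyclic T → T ⊆ P) (x : X) =>
      h.1.exists_superset_mem h.2 x
  let d : ℕ → X := TopologicalSpace.denseSeq X
  let S : ℕ → Set X := Nat.rec P fun n R => Q R (d n)
  have hS : ∀ n, IsSkeleton (S n) ∧ ∀ T, MaximalCyclic T → T ⊆ S n := fun n => by
    induction n with
    | zero => exact ⟨hP, hPT⟩
    | succ n ih => exact ⟨hQ _ ih _, fun T hT => (ih.2 T hT).trans (hPQ _ ih _)⟩
  have hSm : Monotone S := monotone_nat_of_le_succ fun n => hPQ _ (hS n) _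
  have hd : Dense (⋃ n, S n) := (TopologicalSpace.denseRange_denseSeq X).mono <| by
    rintro _ ⟨n, rfl⟩
    exact mem_iUnion.2 ⟨n + 1, hxQ _ (hS n) _⟩
  refine isANR_of_homotopies (K := fun n => K (S n) (d n)) hSm (fun n => (hS n).1.isNhdExtensor)
    (fun n => hK _ (hS n) _) (fun n => hKQ _ (hS n) _) (fun n z => ?_)
    (fun n z => (hK₁ _ (hS n) _ z).trans (hK₀ _ (hS (n + 1)) _ z).symm) ?_
  · rw [hK₀ _ (hS n)]
    exact (entryPoint_spec (hS n).1.isClosed (hS n).1.nonempty z).1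
  -- `K n z` and `z.1` have the same image under `entryPoint (S n)`, which moves points little.
  · have hu := tendstoUniformly_entryPoint hSm (fun n => (hS n).1.isClosed)
      (fun n => (hS n).1.noChord (hS n).2) hd
    rw [Metric.tendstoUniformly_iff] at hu ⊢
    intro ε hε
    filter_upwards [hu (ε / 2) (half_pos hε)] with n hn z
    have hz : dist z.1 (entryPoint (S n) z.1) < ε / 2 := hn z.1
    have hKz := hn (K (S n) (d n) z)
    rw [hKP _ (hS n), id] at hKz
    linarith [dist_triangle_right z.1 (K (S n) (d n) z) (entryPoint (S n) z.1)]

end Exhaustion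

/-! ### Generalized cactoids -/

theorem IsClosedSurface.isANR {S : Type} [MetricSpace S] (hS : IsClosedSurface S) : IsANR S := by
  obtain ⟨_, -, -, ⟨_⟩⟩ := hS
  exact (isNhdExtensor_univ_of_chartedSpace (EuclideanSpace ℝ (Fin 2))).isANR

theorem IsTopological2Sphere.not_contractibleSpace {S : Type} [TopologicalSpace S]
    (hS : IsTopological2Sphere S) : ¬ ContractibleSpace S := fun hc => by
  obtain ⟨e⟩ := hS
  exact not_contractibleSpace_sphere (EuclideanSpace ℝ (Fin 3)) e.symm.contractibleSpace

theorem generalizedCactoid_isANR_iff_finitely_many_maximalCyclic_general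
    (X : Type) [MetricSpace X] [CompactSpace X] [ConnectedSpace X] [LocallyConnectedSpace X]
    (hcl : ∀ T : Set X, MaximalCyclic T → IsClosed T)
    (hANR : ∀ T : Set X, MaximalCyclic T → IsANR T)
    (hfin : {T : Set X | MaximalCyclic T ∧ ContractibleSpace T}.Finite) :
    IsANR X ↔ {T : Set X | MaximalCyclic T}.Finite := by
  have : LocallyPathConnectedSpace X := locallyPathConnectedSpace_of_completeSpace
  have : PathConnectedSpace X := PathConnectedSpace.of_locallyPathConnectedSpace
  constructor
  · intro hX
    have hncfin : {T : Set X | MaximalCyclic T ∧ ¬ ContractibleSpace T}.Finite :=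
      hX.isNhdExtensor_univ.finite_maximalCyclic_not_contractibleSpace hcl
    exact (hfin.union hncfin).subset fun T hT =>
      (em (ContractibleSpace T)).imp (And.intro hT) (And.intro hT)
  · intro hT
    obtain ⟨P, hP, hPT⟩ := exists_isSkeleton_superset_maximalCyclic
      (fun T hT => hT.isSkeleton (hcl T hT) (hANR T hT)) hT
    exact hP.isANR hPT

/-- A finite-dimensional generalized cactoid (a Peano space whose maximal cyclic
subsets are closed surfaces, only finitely many of which are not 2-spheres) is an
ANR if and only if it has only finitely many maximal cyclic subsets. -/
theorem generalizedCactoid_isANR_iff_finitely_many_maximalCyclic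
    (X : Type) [MetricSpace X] [CompactSpace X] [ConnectedSpace X] [LocallyConnectedSpace X]
    (hdim : ∃ n : ℕ, CovDimLE X n)
    (hsurf : ∀ T : Set X, MaximalCyclic T → IsClosedSurface ↥T)
    (hfin : {T : Set X | MaximalCyclic T ∧ ¬ IsTopological2Sphere ↥T}.Finite) :
    IsANR X ↔ {T : Set X | MaximalCyclic T}.Finite :=
  generalizedCactoid_isANR_iff_finitely_many_maximalCyclic_general X
    (fun T hT => (isCompact_iff_compactSpace.2 (hsurf T hT).1).isClosed)
    (fun T hT => (hsurf T hT).isANR)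
    (hfin.subset fun _ hT => ⟨hT.1, fun h => h.not_contractibleSpace hT.2⟩)
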